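/- arXiv:1806.08855 — 3 statements merged into one kernel-verified Lean document; each statement's English description precedes it below -/
import Mathlib

section
/- Suppose m, l, t are positive integers with m ≥ tl. Let G be a family of l-element subsets of [m] and α := |G|/C(m,l). Let B = (B_1,…,B_t) be a uniformly random ordered tuple of t pairwise disjoint l-element subsets of [m], and let η := |{i ∈ [t] : B_i ∈ G}|. Fix a real constant C with 0 < C ≤ 1/2, C ≥ α and C²t ≥ 16. Then Pr[η ≥ 4Ct] ≤ 2·e^{−C²t/2}·Pr[|η − 2Ct| ≤ Ct]. -/
open Finset

/-- The set of ordered tuples of `t` pairwise disjoint `l`-element subsets of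
`{0,…,m-1}` (ordered `t`-matchings of `l`-sets). -/
noncomputable def tupleSpace (m l t : ℕ) : Finset (Fin t → Finset ℕ) :=
  (Fintype.piFinset fun _ : Fin t => (Finset.range m).powersetCard l).filter
    fun B => ∀ i j : Fin t, i ≠ j → Disjoint (B i) (B j)

/-- `hits G B` is the number of indices `i` with `B i ∈ G`. -/
noncomputable def hits (G : Finset (Finset ℕ)) {t : ℕ} (B : Fin t → Finset ℕ) : ℕ :=
  (Finset.univ.filter fun i : Fin t => B i ∈ G).card

/-! Two facts about the random family `B` of pairwise disjoint sets drive the argument.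

*Brascamp–Lieb.* `𝔼 ∏ √(u i (B i)) ≤ ∏ √(𝔼 u i (B i))` for `u ≥ 0`. A transposition of two points
changes at most two rows of `B`, so by Cauchy–Schwarz replacing `u` by its average with a transposed
copy keeps the right side and does not decrease the left side; the competitor of minimal `ℓ²` norm
is fixed by these averagings, hence constant in each row, and gives equality. Applied to
`u i = exp (2 r f i)` together with Hoeffding's lemma, this bounds the deviation by `s` of
`W = ∑ f i (B i)`, `0 ≤ f i ≤ 1`, `n` rows, by `exp (-s² / n)`.

*Stopping.* Put `b = C n` and expose the points of `B` one at a time. The conditional mean of `W`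
starts at most `2b`, moves by steps of at most `2`, and ends at `W`. So on `4b ≤ W` it visits
`[2b - 2, 2b]`, and what remains after stopping there is again a random family of disjoint sets, for
which `4b ≤ W` has probability at most `exp (-4b² / n)` while `|W - 2b| ≤ b` has probability at
least `1/2`. -/

open scoped BigOperators Pointwise

section Matchings

variable {ι α : Type*} [Fintype ι] [DecidableEq ι] [DecidableEq α] {V : Finset α} {k : ι → ℕ}
  {B : ι → Finset α} {v w : α}

/-- The families `B` of pairwise disjoint subsets of `V` with `#(B i) = k i`. -/
def matchings (V : Finset α) (k : ι → ℕ) : Finset (ι → Finset α) :=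
  (Fintype.piFinset fun i => V.powersetCard (k i)).filter fun B =>
    ∀ i j, i ≠ j → Disjoint (B i) (B j)

theorem mem_matchings :
    B ∈ matchings V k ↔
      (∀ i, B i ⊆ V ∧ #(B i) = k i) ∧ ∀ i j, i ≠ j → Disjoint (B i) (B j) := by
  simp only [matchings, mem_filter, Fintype.mem_piFinset, mem_powersetCard]

theorem swap_smul_finset_subset (hv : v ∈ V) (hw : w ∈ V) {S : Finset α} (hS : S ⊆ V) :
    Equiv.swap v w • S ⊆ V := by
  intro y hy
  obtain ⟨z, hz, rfl⟩ := mem_smul_finset.mp hy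
  rw [Equiv.Perm.smul_def, Equiv.swap_apply_def]
  split_ifs
  exacts [hw, hv, hS hz]

theorem swap_smul_swap_smul {β : Type*} [MulAction (Equiv.Perm α) β] (v w : α) (b : β) :
    Equiv.swap v w • Equiv.swap v w • b = b := by
  rw [smul_smul, Equiv.swap_mul_self, one_smul]

theorem swap_smul_mem_matchings (hv : v ∈ V) (hw : w ∈ V) (hB : B ∈ matchings V k) :
    Equiv.swap v w • B ∈ matchings V k := by
  obtain ⟨hsub, hdisj⟩ := mem_matchings.mp hB
  refine mem_matchings.mpr
    ⟨fun i => ⟨swap_smul_finset_subset hv hw (hsub i).1, ?_⟩, fun i j hij => ?_⟩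
  · rw [Pi.smul_apply, card_smul_finset, (hsub i).2]
  · rw [← disjoint_coe, Pi.smul_apply, Pi.smul_apply, coe_smul_finset, coe_smul_finset,
      Set.disjoint_smul_set, disjoint_coe]
    exact hdisj i j hij

theorem sum_matchings_swap (hv : v ∈ V) (hw : w ∈ V) (φ : (ι → Finset α) → ℝ) :
    ∑ B ∈ matchings V k, φ (Equiv.swap v w • B) = ∑ B ∈ matchings V k, φ B :=
  sum_nbij' (Equiv.swap v w • ·) (Equiv.swap v w • ·)
    (fun _ => swap_smul_mem_matchings hv hw) (fun _ => swap_smul_mem_matchings hv hw)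
    (fun B _ => swap_smul_swap_smul v w B) (fun B _ => swap_smul_swap_smul v w B) fun _ _ => rfl

theorem swap_smul_finset_of_notMem {S : Finset α} (hv : v ∉ S) (hw : w ∉ S) :
    Equiv.swap v w • S = S := by
  have fixed : ∀ y ∈ S, Equiv.swap v w y = y := fun y hy =>
    Equiv.swap_apply_of_ne_of_ne (ne_of_mem_of_not_mem hy hv) (ne_of_mem_of_not_mem hy hw)
  exact (image_congr fun y hy => fixed y hy).trans image_id

theorem card_filter_mem_le_one (hB : B ∈ matchings V k) (v : α) : #{i | v ∈ B i} ≤ 1 :=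
  card_le_one.mpr fun i hi j hj => by
    by_contra hij
    exact disjoint_left.mp ((mem_matchings.mp hB).2 i j hij)
      (mem_filter.mp hi).2 (mem_filter.mp hj).2

theorem card_filter_swap_smul_ne_le_two (hB : B ∈ matchings V k) (v w : α) :
    #{i | Equiv.swap v w • B i ≠ B i} ≤ 2 :=
  calc #{i | Equiv.swap v w • B i ≠ B i}
      ≤ #(({i | v ∈ B i} : Finset ι) ∪ ({i | w ∈ B i} : Finset ι)) := card_le_card fun i hi => by
        contrapose! hi
        simp only [mem_union, mem_filter, mem_univ, true_and, not_or] at hi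
        simpa using swap_smul_finset_of_notMem hi.1 hi.2
    _ ≤ #{i | v ∈ B i} + #{i | w ∈ B i} := card_union_le _ _
    _ ≤ 1 + 1 := add_le_add (card_filter_mem_le_one hB v) (card_filter_mem_le_one hB w)

theorem swap_induction {p : Finset α → Prop}
    (swap : ∀ S ⊆ V, ∀ v ∈ V, ∀ w ∈ V, p S → p (Equiv.swap v w • S))
    {S T : Finset α} (hS : S ⊆ V) (hT : T ⊆ V) (hcard : #S = #T) (hpS : p S) : p T := by
  induction hn : #(S \ T) generalizing S with
  | zero =>
    rwa [← eq_of_subset_of_card_le (sdiff_eq_empty_iff_subset.mp (card_eq_zero.mp hn)) hcard.ge]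
  | succ n ih =>
    obtain ⟨v, hv⟩ : (S \ T).Nonempty := card_pos.mp (by omega)
    obtain ⟨w, hw⟩ : (T \ S).Nonempty := card_pos.mp (by rw [← card_sdiff_comm hcard]; omega)
    rw [mem_sdiff] at hv hw
    have swap_sdiff : (Equiv.swap v w • S) \ T = (S \ T).erase v := by
      ext y
      rw [mem_sdiff, ← inv_smul_mem_iff, Equiv.swap_inv, Equiv.Perm.smul_def, mem_erase, mem_sdiff,
        Equiv.swap_apply_def]
      split_ifs with hyv hyw
      · simp [hyv, hw.2]
      · simp [hyw, hw]
      · simp [hyv]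
    refine ih (swap_smul_finset_subset (hS hv.1) (hT hw.1) hS) ?_
      (swap S hS v (hS hv.1) w (hT hw.1) hpS) ?_
    · rw [card_smul_finset, hcard]
    · rw [swap_sdiff, card_erase_of_mem (mem_sdiff.mpr hv), hn, Nat.add_sub_cancel]

theorem expect_matchings_eval (hM : (matchings V k).Nonempty) (i : ι) (f : Finset α → ℝ) :
    𝔼 B ∈ matchings V k, f (B i) = 𝔼 S ∈ V.powersetCard (k i), f S := by
  let fibre S := #{B ∈ matchings V k | B i = S}
  obtain ⟨B₀, hB₀⟩ := hM
  have maps B (hB : B ∈ matchings V k) : B i ∈ V.powersetCard (k i) :=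
    mem_powersetCard.mpr ((mem_matchings.mp hB).1 i)
  have fibre_le_fibre_swap S v (hv : v ∈ V) w (hw : w ∈ V) :
      fibre S ≤ fibre (Equiv.swap v w • S) :=
    card_le_card_of_injOn (Equiv.swap v w • ·)
      (fun B hB => by
        rw [mem_coe, mem_filter] at hB ⊢
        exact ⟨swap_smul_mem_matchings hv hw hB.1, congrArg (Equiv.swap v w • ·) hB.2⟩)
      (MulAction.injective _).injOn
  have fibre_const S (hS : S ∈ V.powersetCard (k i)) : fibre S = fibre (B₀ i) := by
    obtain ⟨hS, hSk⟩ := mem_powersetCard.mp hS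
    obtain ⟨hT, hTk⟩ := mem_powersetCard.mp (maps B₀ hB₀)
    refine swap_induction (p := fun S => fibre S = fibre (B₀ i)) (fun S _ v hv w hw h => ?_)
      hT hS (hTk.trans hSk.symm) rfl
    refine le_antisymm ?_ (h ▸ fibre_le_fibre_swap S v hv w hw)
    simpa only [swap_smul_swap_smul, h] using fibre_le_fibre_swap (Equiv.swap v w • S) v hv w hw
  have sum_eval (g : Finset α → ℝ) :
      ∑ B ∈ matchings V k, g (B i) = fibre (B₀ i) * ∑ S ∈ V.powersetCard (k i), g S := by
    rw [← sum_fiberwise_of_maps_to maps, mul_sum]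
    refine sum_congr rfl fun S hS => ?_
    rw [sum_congr rfl fun B hB => by rw [(mem_filter.mp hB).2], sum_const, nsmul_eq_mul,
      ← fibre_const S hS]
  have fibre_pos : (0 : ℝ) < fibre (B₀ i) :=
    Nat.cast_pos.mpr (card_pos.mpr ⟨B₀, mem_filter.mpr ⟨hB₀, rfl⟩⟩)
  have hcard := sum_eval 1
  simp only [Pi.one_apply, sum_const, nsmul_eq_mul, mul_one] at hcard
  rw [expect_eq_sum_div_card, expect_eq_sum_div_card, sum_eval, hcard,
    mul_div_mul_left _ _ fibre_pos.ne']

end Matchings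

section BrascampLieb

variable {ι α : Type*} [Fintype ι]

open Real

theorem sqrt_mul_sqrt_add_sqrt_mul_sqrt_le {a b c d : ℝ} (ha : 0 ≤ a) (hb : 0 ≤ b) (hc : 0 ≤ c)
    (hd : 0 ≤ d) :
    √a * √c + √b * √d ≤ 2 * (√((a + b) / 2) * √((c + d) / 2)) := by
  have cauchy_schwarz : √a * √c + √b * √d ≤ √(a + b) * √(c + d) := by
    simpa [Fin.sum_univ_two] using sum_sqrt_mul_sqrt_le (univ : Finset (Fin 2))
      (f := ![a, b]) (g := ![c, d]) (by simp [Fin.forall_fin_two, ha, hb])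
      (by simp [Fin.forall_fin_two, hc, hd])
  rw [sqrt_div (by positivity), sqrt_div (by positivity), div_mul_div_comm,
    mul_self_sqrt zero_le_two]
  linarith

theorem sqrt_add_sqrt_le {a b : ℝ} (ha : 0 ≤ a) (hb : 0 ≤ b) :
    √a + √b ≤ 2 * √((a + b) / 2) := by
  simpa using sqrt_mul_sqrt_add_sqrt_mul_sqrt_le ha hb zero_le_one zero_le_one

theorem prod_sqrt_add_prod_sqrt_le {a b : ι → ℝ} (ha : ∀ i, 0 ≤ a i) (hb : ∀ i, 0 ≤ b i)
    (hab : #{i | b i ≠ a i} ≤ 2) :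
    ∏ i, √(a i) + ∏ i, √(b i) ≤ 2 * ∏ i, √((a i + b i) / 2) := by
  classical
  set s : Finset ι := {i | b i ≠ a i} with hs
  have off i (hi : i ∈ sᶜ) : b i = a i := by simpa [hs] using hi
  have on_changed : ∏ i ∈ s, √(a i) + ∏ i ∈ s, √(b i) ≤ 2 * ∏ i ∈ s, √((a i + b i) / 2) := by
    obtain h | h | h : #s = 0 ∨ #s = 1 ∨ #s = 2 := by omega
    · norm_num [card_eq_zero.mp h]
    · obtain ⟨i, hi⟩ := card_eq_one.mp h
      simpa only [hi, prod_singleton] using sqrt_add_sqrt_le (ha i) (hb i)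
    · obtain ⟨i, j, hij, h⟩ := card_eq_two.mp h
      simpa only [h, prod_pair hij] using
        sqrt_mul_sqrt_add_sqrt_mul_sqrt_le (ha i) (hb i) (ha j) (hb j)
  have off_b : ∏ i ∈ sᶜ, √(b i) = ∏ i ∈ sᶜ, √(a i) := prod_congr rfl fun i hi => by rw [off i hi]
  have off_average : ∏ i ∈ sᶜ, √((a i + b i) / 2) = ∏ i ∈ sᶜ, √(a i) :=
    prod_congr rfl fun i hi => by rw [off i hi, add_self_div_two]
  rw [← prod_mul_prod_compl s fun i => √(a i), ← prod_mul_prod_compl s fun i => √(b i),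
    ← prod_mul_prod_compl s fun i => √((a i + b i) / 2), off_b, off_average, ← add_mul, ← mul_assoc]
  gcongr

variable [DecidableEq ι] [DecidableEq α] {V : Finset α} {k : ι → ℕ} {v w : α}

/-- The unnormalised left side of the Brascamp–Lieb inequality for a uniformly random matching. -/
noncomputable def sumProdSqrt (V : Finset α) (k : ι → ℕ) (h : ι → Finset α → ℝ) : ℝ :=
  ∑ B ∈ matchings V k, ∏ i, √(h i (B i))

/-- The average of `h` with its image under the transposition of `v` and `w`. -/
noncomputable def swapAverage (v w : α) (h : ι → Finset α → ℝ) (i : ι) (S : Finset α) : ℝ :=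
  (h i S + h i (Equiv.swap v w • S)) / 2

theorem sumProdSqrt_le_swapAverage (hv : v ∈ V) (hw : w ∈ V) {h : ι → Finset α → ℝ}
    (h_nonneg : ∀ i S, 0 ≤ h i S) : sumProdSqrt V k h ≤ sumProdSqrt V k (swapAverage v w h) := by
  have pointwise B (hB : B ∈ matchings V k) :
      ∏ i, √(h i (B i)) + ∏ i, √(h i (Equiv.swap v w • B i)) ≤
        2 * ∏ i, √(swapAverage v w h i (B i)) := by
    refine prod_sqrt_add_prod_sqrt_le (fun _ => h_nonneg _ _) (fun _ => h_nonneg _ _)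
      (le_trans (card_le_card ?_) (card_filter_swap_smul_ne_le_two hB v w))
    exact monotone_filter_right _ fun i _ hi hBi => hi (by rw [hBi])
  have reindex := sum_matchings_swap (k := k) hv hw fun B => ∏ i, √(h i (B i))
  have := sum_le_sum pointwise
  rw [sum_add_distrib, ← mul_sum] at this
  simp only [Pi.smul_apply] at reindex
  unfold sumProdSqrt
  linarith

theorem sum_matchings_swapAverage (hv : v ∈ V) (hw : w ∈ V) (h : ι → Finset α → ℝ) (i : ι) :
    ∑ B ∈ matchings V k, swapAverage v w h i (B i) = ∑ B ∈ matchings V k, h i (B i) := by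
  have := sum_matchings_swap (k := k) hv hw fun B => h i (B i)
  simp only [Pi.smul_apply] at this
  simp only [swapAverage, ← sum_div, sum_add_distrib, this, add_self_div_two]

theorem sum_sq_swapAverage (hv : v ∈ V) (hw : w ∈ V) (h : ι → Finset α → ℝ) :
    ∑ B ∈ matchings V k, ∑ i, swapAverage v w h i (B i) ^ 2 +
        ∑ B ∈ matchings V k, ∑ i, ((h i (B i) - h i (Equiv.swap v w • B i)) / 2) ^ 2 =
      ∑ B ∈ matchings V k, ∑ i, h i (B i) ^ 2 := by
  have := sum_matchings_swap (k := k) hv hw fun B => ∑ i, h i (B i) ^ 2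
  simp only [Pi.smul_apply] at this
  have parallelogram (x y : ℝ) : ((x + y) / 2) ^ 2 + ((x - y) / 2) ^ 2 = (x ^ 2 + y ^ 2) / 2 := by
    ring
  simp only [swapAverage, ← sum_add_distrib, parallelogram]
  simp only [← sum_div, sum_add_distrib, this, add_self_div_two]

/-- The functions with values in `[0, c]` having the same row sums as `u` and at least as large a
`sumProdSqrt`; the set over which the symmetrisation of `u` is found by minimising an `ℓ²` norm. -/
def competitors (V : Finset α) (k : ι → ℕ) (u : ι → Finset α → ℝ) (c : ℝ) :
    Set (ι → Finset α → ℝ) :=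
  {h | h ∈ Set.Icc 0 (fun _ _ => c) ∧
    (∀ i, ∑ B ∈ matchings V k, h i (B i) = ∑ B ∈ matchings V k, u i (B i)) ∧
    sumProdSqrt V k u ≤ sumProdSqrt V k h}

theorem isCompact_competitors (u : ι → Finset α → ℝ) (c : ℝ) :
    IsCompact (competitors V k u c) := by
  have sums : IsClosed {h : ι → Finset α → ℝ |
      ∀ i, ∑ B ∈ matchings V k, h i (B i) = ∑ B ∈ matchings V k, u i (B i)} := by
    rw [Set.ofPred_forall]
    exact isClosed_iInter fun i => isClosed_eq (by fun_prop) continuous_const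
  have le : IsClosed {h : ι → Finset α → ℝ | sumProdSqrt V k u ≤ sumProdSqrt V k h} :=
    isClosed_le continuous_const (by unfold sumProdSqrt; fun_prop)
  exact isCompact_Icc.inter_right (sums.inter le)

theorem exists_competitors_nonempty {u : ι → Finset α → ℝ} (hu : ∀ i S, 0 ≤ u i S) :
    ∃ c, (competitors V k u c).Nonempty := by
  let c := ∑ B ∈ matchings V k, ∑ i, u i (B i)
  have u_le B (hB : B ∈ matchings V k) i : u i (B i) ≤ c :=
    (single_le_sum (fun i _ => hu i (B i)) (mem_univ i)).trans
      (single_le_sum (f := fun B => ∑ i, u i (B i))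
        (fun B _ => sum_nonneg fun i _ => hu i (B i)) hB)
  have c_nonneg : 0 ≤ c := sum_nonneg fun B _ => sum_nonneg fun i _ => hu i (B i)
  refine ⟨c, fun i S => min (u i S) c, 
    ⟨fun i S => le_min (hu i S) c_nonneg, fun i S => min_le_right _ _⟩,
    fun i => sum_congr rfl fun B hB => min_eq_left (u_le B hB i), le_of_eq ?_⟩
  exact sum_congr rfl fun B hB => prod_congr rfl fun i _ =>
    congrArg sqrt (min_eq_left (u_le B hB i)).symm

theorem swapAverage_mem_competitors (hv : v ∈ V) (hw : w ∈ V) {u h : ι → Finset α → ℝ} {c : ℝ}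
    (hh : h ∈ competitors V k u c) : swapAverage v w h ∈ competitors V k u c := by
  obtain ⟨⟨h_nonneg, h_le⟩, sums, le⟩ := hh
  refine ⟨⟨fun i S => ?_, fun i S => ?_⟩, fun i => ?_, ?_⟩
  · exact div_nonneg (add_nonneg (h_nonneg _ _) (h_nonneg _ _)) zero_le_two
  · exact (div_le_iff₀ zero_lt_two).mpr
      ((add_le_add (h_le _ _) (h_le _ _)).trans (mul_two c).ge)
  · rw [sum_matchings_swapAverage hv hw, sums]
  · exact le.trans (sumProdSqrt_le_swapAverage hv hw h_nonneg)

theorem exists_mem_competitors_swap_invariant {u : ι → Finset α → ℝ} (hu : ∀ i S, 0 ≤ u i S) :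
    ∃ c, ∃ h ∈ competitors V k u c, ∀ v ∈ V, ∀ w ∈ V, ∀ B ∈ matchings V k, ∀ i,
      h i (Equiv.swap v w • B i) = h i (B i) := by
  obtain ⟨c, nonempty⟩ := exists_competitors_nonempty (V := V) (k := k) hu
  have norm_continuous : Continuous fun h : ι → Finset α → ℝ =>
      ∑ B ∈ matchings V k, ∑ i, h i (B i) ^ 2 := by fun_prop
  obtain ⟨h, hh, h_min⟩ := (isCompact_competitors u c).exists_isMinOn nonempty
    norm_continuous.continuousOn
  refine ⟨c, h, hh, fun v hv w hw B hB i => ?_⟩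
  -- otherwise, by the parallelogram identity, the average of `h` and its swap would be shorter
  have average_ge := isMinOn_iff.mp h_min _ (swapAverage_mem_competitors hv hw hh)
  have gap_nonneg (B : ι → Finset α) :
      0 ≤ ∑ i, ((h i (B i) - h i (Equiv.swap v w • B i)) / 2) ^ 2 :=
    sum_nonneg fun _ _ => sq_nonneg _
  have gap_sum_le : ∑ B ∈ matchings V k, ∑ i,
      ((h i (B i) - h i (Equiv.swap v w • B i)) / 2) ^ 2 ≤ 0 := by
    have := sum_sq_swapAverage (k := k) hv hw h
    linarith
  have row := (sum_eq_zero_iff_of_nonneg fun B _ => gap_nonneg B).mp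
    (gap_sum_le.antisymm (sum_nonneg fun B _ => gap_nonneg B)) B hB
  have entry := (sum_eq_zero_iff_of_nonneg fun _ _ => sq_nonneg _).mp row i (mem_univ i)
  linarith [pow_eq_zero_iff two_ne_zero |>.mp entry]

theorem expect_prod_sqrt_le_prod_sqrt_expect {u : ι → Finset α → ℝ} (hu : ∀ i S, 0 ≤ u i S) :
    𝔼 B ∈ matchings V k, ∏ i, √(u i (B i)) ≤ ∏ i, √(𝔼 B ∈ matchings V k, u i (B i)) := by
  obtain hM | ⟨B₀, hB₀⟩ := (matchings V k).eq_empty_or_nonempty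
  · simp only [hM, expect_empty]
    positivity
  obtain ⟨c, h, ⟨-, sums, le⟩, invariant⟩ :=
    exists_mem_competitors_swap_invariant (V := V) (k := k) hu
  have h_const B (hB : B ∈ matchings V k) i : h i (B i) = h i (B₀ i) := by
    obtain ⟨hS, hSk⟩ := (mem_matchings.mp hB₀).1 i
    obtain ⟨hT, hTk⟩ := (mem_matchings.mp hB).1 i
    suffices ∃ B' ∈ matchings V k, B' i = B i ∧ h i (B' i) = h i (B₀ i) by
      obtain ⟨B', -, hB', h_eq⟩ := this
      rwa [← hB']
    refine swap_induction (p := fun S => ∃ B' ∈ matchings V k, B' i = S ∧ h i (B' i) = h i (B₀ i))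
      ?_ hS hT (hSk.trans hTk.symm) ⟨B₀, hB₀, rfl, rfl⟩
    rintro _ - v hv w hw ⟨B', hB', rfl, h_eq⟩
    exact ⟨_, swap_smul_mem_matchings hv hw hB', rfl, (invariant v hv w hw B' hB' i).trans h_eq⟩
  have expect_u i : 𝔼 B ∈ matchings V k, u i (B i) = h i (B₀ i) := by
    rw [expect_eq_sum_div_card, ← sums, ← expect_eq_sum_div_card,
      expect_congr rfl fun B hB => h_const B hB i, expect_const ⟨B₀, hB₀⟩]
  have expect_h : 𝔼 B ∈ matchings V k, ∏ i, √(h i (B i)) = ∏ i, √(h i (B₀ i)) := by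
    rw [expect_congr rfl fun B hB => prod_congr rfl fun i _ => by rw [h_const B hB i],
      expect_const ⟨B₀, hB₀⟩]
  simp only [expect_u]
  rw [← expect_h, expect_eq_sum_div_card, expect_eq_sum_div_card]
  exact div_le_div_of_nonneg_right le (Nat.cast_nonneg _)

end BrascampLieb

section Concentration

open Real

theorem hoeffding_expect_exp_mul_le {Ω : Type*} (s : Finset Ω) {f : Ω → ℝ}
    (hf : ∀ ω ∈ s, f ω ∈ Set.Icc (0 : ℝ) 1) (r : ℝ) :
    𝔼 ω ∈ s, exp (r * f ω) ≤ exp (r * 𝔼 ω ∈ s, f ω + r ^ 2 / 8) := by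
  obtain rfl | hs := s.eq_empty_or_nonempty
  · simpa using (exp_pos _).le
  have := hs.to_subtype
  let _ : MeasurableSpace s := ⊤
  let p := PMF.uniformOfFintype s
  have integral_eq (φ : Ω → ℝ) : ∫ ω, φ ω ∂p.toMeasure = 𝔼 ω ∈ s, φ ω := by
    rw [PMF.integral_eq_sum, expect_eq_sum_div_card, ← sum_coe_sort s, sum_div]
    refine sum_congr rfl fun ω _ => ?_
    simp [p, div_eq_inv_mul]
  have subgaussian := (ProbabilityTheory.hasSubgaussianMGF_of_mem_Icc (μ := p.toMeasure)
    (X := fun ω => f ω) measurable_from_top.aemeasurable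
    (Filter.Eventually.of_forall fun ω => hf ω ω.2)).mgf_le r
  rw [ProbabilityTheory.mgf, integral_eq f,
    integral_eq fun ω => exp (r * (f ω - 𝔼 ω' ∈ s, f ω'))] at subgaussian
  calc 𝔼 ω ∈ s, exp (r * f ω)
      = exp (r * 𝔼 ω ∈ s, f ω) * 𝔼 ω ∈ s, exp (r * (f ω - 𝔼 ω' ∈ s, f ω')) := by
        rw [mul_expect]
        refine expect_congr rfl fun ω _ => ?_
        rw [← exp_add]
        ring_nf
    _ ≤ exp (r * 𝔼 ω ∈ s, f ω) * exp (r ^ 2 / 8) := by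
        gcongr
        refine subgaussian.trans_eq ?_
        norm_num
        ring
    _ = exp (r * 𝔼 ω ∈ s, f ω + r ^ 2 / 8) := (exp_add _ _).symm

theorem card_filter_mul_exp_le_sum_exp {Ω : Type*} (s : Finset Ω) (g : Ω → ℝ) {r : ℝ} (hr : 0 ≤ r)
    (y : ℝ) : #{ω ∈ s | y ≤ g ω} * exp (r * y) ≤ ∑ ω ∈ s, exp (r * g ω) := by
  rw [← nsmul_eq_mul]
  refine (card_nsmul_le_sum _ _ _ fun ω hω => ?_).trans
    (sum_le_sum_of_subset_of_nonneg (filter_subset _ _) fun ω _ _ => (exp_pos _).le)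
  have := (mem_filter.mp hω).2
  gcongr

variable {ι α : Type*} [Fintype ι] [DecidableEq ι] [DecidableEq α] {V : Finset α} {k : ι → ℕ}
  {f : ι → Finset α → ℝ}

/-- The total weight of a family `B`, where the set in row `i` is weighted by `f i`. -/
def tupleWeight (f : ι → Finset α → ℝ) (B : ι → Finset α) : ℝ := ∑ i, f i (B i)

theorem expect_exp_mul_tupleWeight_le (hf : ∀ i S, f i S ∈ Set.Icc (0 : ℝ) 1) (r : ℝ) :
    𝔼 B ∈ matchings V k, exp (r * tupleWeight f B) ≤
      exp (r * 𝔼 B ∈ matchings V k, tupleWeight f B + Fintype.card ι * r ^ 2 / 4) :=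
  calc 𝔼 B ∈ matchings V k, exp (r * tupleWeight f B)
      = 𝔼 B ∈ matchings V k, ∏ i, √(exp (2 * r * f i (B i))) := by
        refine expect_congr rfl fun B _ => ?_
        rw [tupleWeight, mul_sum, exp_sum]
        refine prod_congr rfl fun i _ => ?_
        rw [← exp_half]
        ring_nf
    _ ≤ ∏ i, √(𝔼 B ∈ matchings V k, exp (2 * r * f i (B i))) :=
        expect_prod_sqrt_le_prod_sqrt_expect (u := fun i S => exp (2 * r * f i S))
          fun _ _ => (exp_pos _).le
    _ ≤ ∏ i, √(exp (2 * r * 𝔼 B ∈ matchings V k, f i (B i) + (2 * r) ^ 2 / 8)) := by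
        gcongr with i
        exact hoeffding_expect_exp_mul_le _ (fun (B : ι → Finset α) _ => hf i (B i)) _
    _ = exp (r * 𝔼 B ∈ matchings V k, tupleWeight f B + Fintype.card ι * r ^ 2 / 4) := by
        simp only [← exp_half, ← exp_sum, tupleWeight]
        rw [expect_sum_comm, ← sum_div, sum_add_distrib, ← mul_sum, sum_const, card_univ,
          nsmul_eq_mul]
        ring_nf

theorem card_upper_tail_le (hf : ∀ i S, f i S ∈ Set.Icc (0 : ℝ) 1) {s y : ℝ} (hs : 0 ≤ s)
    (hy : 𝔼 B ∈ matchings V k, tupleWeight f B + s ≤ y) :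
    (#{B ∈ matchings V k | y ≤ tupleWeight f B} : ℝ) ≤
      #(matchings V k) * exp (-s ^ 2 / Fintype.card ι) := by
  set μ := 𝔼 B ∈ matchings V k, tupleWeight f B
  set n := (Fintype.card ι : ℝ)
  set r := 2 * s / n
  have r_nonneg : 0 ≤ r := by positivity
  have markov := card_filter_mul_exp_le_sum_exp (matchings V k) (tupleWeight f) r_nonneg y
  rw [← card_mul_expect] at markov
  have exponent : r * μ + n * r ^ 2 / 4 - r * y ≤ -s ^ 2 / n := by
    have : r * (μ + s) ≤ r * y := by gcongr
    have : n * r ^ 2 / 4 - r * s = -s ^ 2 / n := by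
      obtain h0 | h0 := eq_or_ne n 0
      · simp [r, h0]
      · simp only [r]
        field_simp
        ring
    linarith
  calc (#{B ∈ matchings V k | y ≤ tupleWeight f B} : ℝ)
      ≤ #(matchings V k) * exp (r * μ + n * r ^ 2 / 4) / exp (r * y) := by
        rw [le_div_iff₀ (exp_pos _)]
        refine markov.trans ?_
        gcongr
        exact expect_exp_mul_tupleWeight_le hf r
    _ = #(matchings V k) * exp (r * μ + n * r ^ 2 / 4 - r * y) := by rw [exp_sub, mul_div_assoc]
    _ ≤ #(matchings V k) * exp (-s ^ 2 / n) := by gcongr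

theorem card_lower_tail_le (hf : ∀ i S, f i S ∈ Set.Icc (0 : ℝ) 1) {s y : ℝ} (hs : 0 ≤ s)
    (hy : y ≤ 𝔼 B ∈ matchings V k, tupleWeight f B - s) :
    (#{B ∈ matchings V k | tupleWeight f B ≤ y} : ℝ) ≤
      #(matchings V k) * exp (-s ^ 2 / Fintype.card ι) := by
  obtain hM | hM := (matchings V k).eq_empty_or_nonempty
  · simp [hM]
  let g i S := 1 - f i S
  have weight_g B : tupleWeight g B = Fintype.card ι - tupleWeight f B := by
    simp [g, tupleWeight]
  have mean_g : 𝔼 B ∈ matchings V k, tupleWeight g B =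
      Fintype.card ι - 𝔼 B ∈ matchings V k, tupleWeight f B := by
    simp only [weight_g, expect_sub_distrib, expect_const hM]
  have := card_upper_tail_le (V := V) (k := k) (f := g) (y := Fintype.card ι - y)
    (fun i S => ⟨sub_nonneg.mpr (hf i S).2, sub_le_self _ (hf i S).1⟩) hs (by linarith)
  simpa only [weight_g, sub_le_sub_iff_left] using this

end Concentration

section Exposure

variable {ι α : Type*} [DecidableEq ι] [DecidableEq α] {V : Finset α} {k : ι → ℕ}
  {f : ι → Finset α → ℝ} {i : ι} {x y : α}

/-- The weights seen by the remaining points once `x` is known to lie in the set of row `i`. -/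
def exposeWeight (f : ι → Finset α → ℝ) (i : ι) (x : α) : ι → Finset α → ℝ :=
  Function.update f i fun S => f i (insert x S)

theorem exposeWeight_mem_Icc (hf : ∀ i S, f i S ∈ Set.Icc (0 : ℝ) 1) (i : ι) (x : α) (j : ι)
    (S : Finset α) : exposeWeight f i x j S ∈ Set.Icc (0 : ℝ) 1 := by
  obtain rfl | hji := eq_or_ne j i
  · simpa only [exposeWeight, Function.update_self] using hf j _
  · simpa only [exposeWeight, Function.update_of_ne hji] using hf j S

theorem exists_eq_add_single (hi : k i ≠ 0) : ∃ k' : ι → ℕ, k = k' + Pi.single i 1 := by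
  refine ⟨k - Pi.single i 1, (tsub_add_cancel_of_le fun j => ?_).symm⟩
  obtain rfl | hj := eq_or_ne j i
  · simpa only [Pi.single_eq_same] using Nat.one_le_iff_ne_zero.mpr hi
  · simp only [Pi.single_eq_of_ne hj, zero_le]

variable [Fintype ι]

theorem tupleWeight_exposeWeight (f : ι → Finset α → ℝ) (i : ι) (x : α) (B : ι → Finset α) :
    tupleWeight (exposeWeight f i x) B = tupleWeight f (Function.update B i (insert x (B i))) := by
  refine sum_congr rfl fun j _ => ?_
  obtain rfl | hji := eq_or_ne j i
  · simp only [exposeWeight, Function.update_self]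
  · simp only [exposeWeight, Function.update_of_ne hji]

theorem insert_mem_matchings (hx : x ∈ V) {B : ι → Finset α} (hB : B ∈ matchings (V.erase x) k) :
    Function.update B i (insert x (B i)) ∈ matchings V (k + Pi.single i 1) := by
  obtain ⟨rows, disj⟩ := mem_matchings.mp hB
  have notMem j : x ∉ B j := fun h => notMem_erase x V ((rows j).1 h)
  have disj_insert j (hj : j ≠ i) : Disjoint (insert x (B i)) (B j) :=
    disjoint_insert_left.mpr ⟨notMem j, disj i j hj.symm⟩
  refine mem_matchings.mpr ⟨fun j => ?_, fun j j' hjj' => ?_⟩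
  · obtain rfl | hj := eq_or_ne j i
    · simp only [Function.update_self, Pi.add_apply, Pi.single_eq_same]
      exact ⟨insert_subset hx ((rows j).1.trans (erase_subset x V)),
        by rw [card_insert_of_notMem (notMem j), (rows j).2]⟩
    · simp only [Function.update_of_ne hj, Pi.add_apply, Pi.single_eq_of_ne hj, add_zero]
      exact ⟨(rows j).1.trans (erase_subset x V), (rows j).2⟩
  · obtain rfl | hj := eq_or_ne j i
    · rw [Function.update_self, Function.update_of_ne hjj'.symm]
      exact disj_insert j' hjj'.symm
    · rw [Function.update_of_ne hj]
      obtain rfl | hj' := eq_or_ne j' i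
      · rw [Function.update_self]
        exact (disj_insert j hj).symm
      · rw [Function.update_of_ne hj']
        exact disj j j' hjj'

theorem erase_mem_matchings {B : ι → Finset α}
    (hB : B ∈ matchings V (k + Pi.single i 1)) (hx : x ∈ B i) :
    Function.update B i ((B i).erase x) ∈ matchings (V.erase x) k := by
  obtain ⟨rows, disj⟩ := mem_matchings.mp hB
  have update_subset j : Function.update B i ((B i).erase x) j ⊆ B j := by
    obtain rfl | hj := eq_or_ne j i
    · rw [Function.update_self]
      exact erase_subset x _
    · rw [Function.update_of_ne hj]
  refine mem_matchings.mpr ⟨fun j => ?_, fun j j' hjj' =>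
    (disj j j' hjj').mono (update_subset j) (update_subset j')⟩
  obtain ⟨hsub, hcard⟩ := rows j
  obtain rfl | hj := eq_or_ne j i
  · rw [Pi.add_apply, Pi.single_eq_same] at hcard
    rw [Function.update_self, card_erase_of_mem hx, hcard]
    exact ⟨erase_subset_erase x hsub, Nat.add_sub_cancel _ _⟩
  · rw [Pi.add_apply, Pi.single_eq_of_ne hj, add_zero] at hcard
    rw [Function.update_of_ne hj]
    exact ⟨subset_erase.mpr ⟨hsub, disjoint_left.mp (disj i j hj.symm) hx⟩, hcard⟩

theorem sum_matchings_erase (hx : x ∈ V) (i : ι) (φ : (ι → Finset α) → ℝ) :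
    ∑ B ∈ matchings (V.erase x) k, φ (Function.update B i (insert x (B i))) =
      ∑ B ∈ matchings V (k + Pi.single i 1) with x ∈ B i, φ B := by
  refine sum_nbij' (fun B => Function.update B i (insert x (B i)))
    (fun B => Function.update B i ((B i).erase x)) (fun B hB => ?_) (fun B hB => ?_)
    (fun B hB => ?_) (fun B hB => ?_) fun _ _ => rfl
  · exact mem_filter.mpr ⟨insert_mem_matchings hx hB, by simp⟩
  · exact erase_mem_matchings (mem_filter.mp hB).1 (mem_filter.mp hB).2
  · have hxB : x ∉ B i := fun h => notMem_erase x V (((mem_matchings.mp hB).1 i).1 h)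
    simp [erase_insert hxB]
  · simp [insert_erase (mem_filter.mp hB).2]

theorem expect_matchings_erase (hx : x ∈ V) (i : ι) (φ : (ι → Finset α) → ℝ) :
    𝔼 B ∈ matchings (V.erase x) k, φ (Function.update B i (insert x (B i))) =
      𝔼 B ∈ matchings V (k + Pi.single i 1) with x ∈ B i, φ B := by
  have card_eq := sum_matchings_erase (k := k) hx i 1
  simp only [Pi.one_apply, sum_const, nsmul_eq_mul, mul_one] at card_eq
  rw [expect_eq_sum_div_card, expect_eq_sum_div_card, sum_matchings_erase hx, card_eq]

theorem sum_sum_matchings_filter_mem (i : ι) (φ : (ι → Finset α) → ℝ) :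
    ∑ x ∈ V, ∑ B ∈ matchings V k with x ∈ B i, φ B = k i * ∑ B ∈ matchings V k, φ B := by
  simp only [sum_filter]
  rw [sum_comm, mul_sum]
  refine sum_congr rfl fun B hB => ?_
  obtain ⟨hsub, hcard⟩ := (mem_matchings.mp hB).1 i
  rw [← sum_filter, filter_mem_eq_inter, inter_eq_right.mpr hsub, sum_const, hcard, nsmul_eq_mul]

theorem sum_matchings_filter_mem_swap (hx : x ∈ V) (hy : y ∈ V) (i : ι) (φ : (ι → Finset α) → ℝ) :
    ∑ B ∈ matchings V k with y ∈ B i, φ (Equiv.swap x y • B) =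
      ∑ B ∈ matchings V k with x ∈ B i, φ B := by
  rw [sum_filter, sum_filter, ← sum_matchings_swap hx hy]
  refine sum_congr rfl fun B _ => if_congr ?_ (by rw [swap_smul_swap_smul]) rfl
  rw [Pi.smul_apply, ← inv_smul_mem_iff, Equiv.swap_inv, Equiv.Perm.smul_def,
    Equiv.swap_apply_right]

theorem tupleWeight_swap_le (hf : ∀ i S, f i S ∈ Set.Icc (0 : ℝ) 1) {B : ι → Finset α}
    (hB : B ∈ matchings V k) (x y : α) :
    tupleWeight f (Equiv.swap x y • B) ≤ tupleWeight f B + 2 := by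
  let changed : Finset ι := {i | Equiv.swap x y • B i ≠ B i}
  have pointwise i : f i (Equiv.swap x y • B i) ≤ f i (B i) + if i ∈ changed then 1 else 0 := by
    split_ifs with hi
    · linarith [(hf i (Equiv.swap x y • B i)).2, (hf i (B i)).1]
    · have : Equiv.swap x y • B i = B i := by simpa [changed] using hi
      rw [this, add_zero]
  calc tupleWeight f (Equiv.swap x y • B)
      ≤ ∑ i, (f i (B i) + if i ∈ changed then 1 else 0) := sum_le_sum fun i _ => pointwise i
    _ = tupleWeight f B + #changed := by
        rw [sum_add_distrib, sum_boole, filter_univ_mem, tupleWeight]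
    _ ≤ tupleWeight f B + 2 := by
        gcongr
        exact_mod_cast card_filter_swap_smul_ne_le_two hB x y

theorem expect_filter_mem_le (hf : ∀ i S, f i S ∈ Set.Icc (0 : ℝ) 1) (hx : x ∈ V) (i : ι) :
    𝔼 B ∈ matchings V k with x ∈ B i, tupleWeight f B ≤
      𝔼 B ∈ matchings V k, tupleWeight f B + 2 := by
  set μ := 𝔼 B ∈ matchings V k, tupleWeight f B
  have μ_nonneg : 0 ≤ μ := expect_nonneg fun B _ => sum_nonneg fun i _ => (hf i (B i)).1
  let total y := ∑ B ∈ matchings V k with y ∈ B i, tupleWeight f B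
  let size y : ℝ := #{B ∈ matchings V k | y ∈ B i}
  -- the transposition of `x` and `y` maps the class `y ∈ B i` onto the class `x ∈ B i`
  have size_eq y (hy : y ∈ V) : size y = size x := by
    simpa [size] using (sum_matchings_filter_mem_swap (k := k) hx hy i 1)
  have total_le y (hy : y ∈ V) : total x ≤ total y + size x * 2 := by
    simp only [← size_eq y hy, total, size]
    rw [← sum_matchings_filter_mem_swap hx hy, ← nsmul_eq_mul, ← sum_const, ← sum_add_distrib]
    exact sum_le_sum fun B hB => tupleWeight_swap_le hf (mem_filter.mp hB).1 x y
  have sum_size : #V * size x = k i * #(matchings V k) := by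
    have := sum_sum_matchings_filter_mem (V := V) (k := k) i 1
    simp only [Pi.one_apply, sum_const, nsmul_eq_mul, mul_one] at this
    rw [← this, sum_congr rfl size_eq, sum_const, nsmul_eq_mul]
  have sum_total : #V * total x ≤ #V * size x * (μ + 2) :=
    calc #V * total x ≤ ∑ y ∈ V, (total y + size x * 2) := by
          rw [← nsmul_eq_mul]
          exact card_nsmul_le_sum V _ _ total_le
      _ = k i * (#(matchings V k) * μ) + #V * (size x * 2) := by
          rw [sum_add_distrib, sum_sum_matchings_filter_mem, card_mul_expect, sum_const,
            nsmul_eq_mul]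
      _ = #V * size x * (μ + 2) := by rw [← mul_assoc, ← sum_size]; ring
  have card_pos : (0 : ℝ) < #V := Nat.cast_pos.mpr (card_pos.mpr ⟨x, hx⟩)
  rw [expect_eq_sum_div_card]
  refine div_le_of_le_mul₀ (Nat.cast_nonneg _) (by positivity) ?_
  rw [mul_assoc, mul_le_mul_iff_right₀ card_pos, mul_comm (size x)] at sum_total
  exact sum_total

theorem expect_exposeWeight_le (hf : ∀ i S, f i S ∈ Set.Icc (0 : ℝ) 1) (hx : x ∈ V) (i : ι) :
    𝔼 B ∈ matchings (V.erase x) k, tupleWeight (exposeWeight f i x) B ≤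
      𝔼 B ∈ matchings V (k + Pi.single i 1), tupleWeight f B + 2 := by
  simp only [tupleWeight_exposeWeight]
  rw [expect_matchings_erase hx]
  exact expect_filter_mem_le hf hx i

theorem tupleWeight_eq_expect_of_sizes_eq_zero (f : ι → Finset α → ℝ) {B : ι → Finset α}
    (hB : B ∈ matchings V 0) :
    tupleWeight f B = 𝔼 B ∈ matchings V 0, tupleWeight f B := by
  have eq_empty B' (hB' : B' ∈ matchings V (0 : ι → ℕ)) : B' = fun _ => ∅ :=
    funext fun i => card_eq_zero.mp ((mem_matchings.mp hB').1 i).2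
  have weight_const B' (hB' : B' ∈ matchings V 0) : tupleWeight f B' = tupleWeight f B := by
    rw [eq_empty B' hB', eq_empty B hB]
  rw [expect_congr rfl weight_const, expect_const ⟨B, hB⟩]

theorem sum_matchings_nonneg_of_expect_le {φ : ℝ → ℝ} {c : ℝ} (hφ : ∀ y < c, 0 ≤ φ y)
    (window : ∀ (V : Finset α) (k : ι → ℕ) (f : ι → Finset α → ℝ),
      (∀ i S, f i S ∈ Set.Icc (0 : ℝ) 1) →
      𝔼 B ∈ matchings V k, tupleWeight f B ∈ Set.Icc (c - 2) c →
      0 ≤ ∑ B ∈ matchings V k, φ (tupleWeight f B))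
    (hf : ∀ i S, f i S ∈ Set.Icc (0 : ℝ) 1) (hc : 𝔼 B ∈ matchings V k, tupleWeight f B ≤ c) :
    0 ≤ ∑ B ∈ matchings V k, φ (tupleWeight f B) := by
  induction hn : ∑ i, k i generalizing V k f with
  | zero =>
    obtain rfl : k = 0 := funext fun i => sum_eq_zero_iff.mp hn i (mem_univ i)
    obtain hc | hc := hc.lt_or_eq
    · exact sum_nonneg fun B hB => hφ _ (tupleWeight_eq_expect_of_sizes_eq_zero f hB ▸ hc)
    · exact window V 0 f hf ⟨by linarith, hc.le⟩
  | succ n ih =>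
    by_cases hwindow : c - 2 ≤ 𝔼 B ∈ matchings V k, tupleWeight f B
    · exact window V k f hf ⟨hwindow, hc⟩
    obtain ⟨i, -, hi⟩ : ∃ i ∈ univ, k i ≠ 0 := exists_ne_zero_of_sum_ne_zero (by omega)
    obtain ⟨k, rfl⟩ := exists_eq_add_single hi
    have sum_eq : ∑ j, k j = n := by
      simpa [sum_add_distrib] using hn
    have class_nonneg x (hx : x ∈ V) :
        0 ≤ ∑ B ∈ matchings V (k + Pi.single i 1) with x ∈ B i, φ (tupleWeight f B) := by
      rw [← sum_matchings_erase hx]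
      simp only [← tupleWeight_exposeWeight]
      refine ih (exposeWeight_mem_Icc hf i x) ?_ sum_eq
      linarith [expect_exposeWeight_le (k := k) hf hx i]
    have := sum_nonneg class_nonneg
    rw [sum_sum_matchings_filter_mem] at this
    exact nonneg_of_mul_nonneg_right this (by positivity)

end Exposure

section BigVersusCentral

open Real

variable {ι α : Type*} [Fintype ι] [DecidableEq ι] [DecidableEq α] {V : Finset α} {k : ι → ℕ}
  {f : ι → Finset α → ℝ}

theorem exp_neg_sq_div_le {n s : ℝ} (hn : 0 < n) (hs : 4 * n ≤ s ^ 2) :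
    exp (-s ^ 2 / n) ≤ 1 / 4 :=
  calc exp (-s ^ 2 / n) ≤ exp (-4) := by
        rw [exp_le_exp, div_le_iff₀ hn]
        linarith
    _ = 1 / exp 4 := by rw [exp_neg, one_div]
    _ ≤ 1 / 4 := by
        gcongr
        linarith [add_one_le_exp (4 : ℝ)]

theorem card_matchings_le_two_mul_card_central [Nonempty ι] (hf : ∀ i S, f i S ∈ Set.Icc (0 : ℝ) 1)
    {b : ℝ} (hb : 4 ≤ b) (hbn : 16 * Fintype.card ι ≤ b ^ 2)
    (hmean : 𝔼 B ∈ matchings V k, tupleWeight f B ∈ Set.Icc (2 * b - 2) (2 * b)) :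
    (#(matchings V k) : ℝ) ≤ 2 * #{B ∈ matchings V k | |tupleWeight f B - 2 * b| ≤ b} := by
  obtain ⟨mean_ge, mean_le⟩ := hmean
  have card_pos : (0 : ℝ) < Fintype.card ι := Nat.cast_pos.mpr Fintype.card_pos
  have upper : (#{B ∈ matchings V k | 3 * b ≤ tupleWeight f B} : ℝ) ≤ #(matchings V k) * (1 / 4) :=
    (card_upper_tail_le hf (s := b) (by linarith) (by linarith)).trans <| by
      gcongr
      exact exp_neg_sq_div_le card_pos (by linarith [sq_nonneg b])
  have lower : (#{B ∈ matchings V k | tupleWeight f B ≤ b} : ℝ) ≤ #(matchings V k) * (1 / 4) :=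
    (card_lower_tail_le hf (s := b - 2) (by linarith) (by linarith)).trans <| by
      gcongr
      exact exp_neg_sq_div_le card_pos (by nlinarith)
  have cover : matchings V k ⊆
      ({B ∈ matchings V k | |tupleWeight f B - 2 * b| ≤ b} ∪
        {B ∈ matchings V k | 3 * b ≤ tupleWeight f B}) ∪
      {B ∈ matchings V k | tupleWeight f B ≤ b} := fun B hB => by
    simp only [mem_union, mem_filter, hB, true_and, abs_le]
    by_contra! h
    linarith [h.1.1 (by linarith)]
  have card_cover : (#(matchings V k) : ℝ) ≤
      #{B ∈ matchings V k | |tupleWeight f B - 2 * b| ≤ b} +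
        #{B ∈ matchings V k | 3 * b ≤ tupleWeight f B} +
      #{B ∈ matchings V k | tupleWeight f B ≤ b} := by
    exact_mod_cast (card_le_card cover).trans
      ((card_union_le _ _).trans (Nat.add_le_add_right (card_union_le _ _) _))
  linarith

theorem card_big_le_card_central_of_expect_mem_Icc [Nonempty ι]
    (hf : ∀ i S, f i S ∈ Set.Icc (0 : ℝ) 1) {b : ℝ} (hb : 4 ≤ b)
    (hbn : 16 * Fintype.card ι ≤ b ^ 2)
    (hmean : 𝔼 B ∈ matchings V k, tupleWeight f B ∈ Set.Icc (2 * b - 2) (2 * b)) :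
    (#{B ∈ matchings V k | 4 * b ≤ tupleWeight f B} : ℝ) ≤
      2 * exp (-4 * b ^ 2 / Fintype.card ι) *
        #{B ∈ matchings V k | |tupleWeight f B - 2 * b| ≤ b} :=
  calc (#{B ∈ matchings V k | 4 * b ≤ tupleWeight f B} : ℝ)
      ≤ #(matchings V k) * exp (-(2 * b) ^ 2 / Fintype.card ι) :=
        card_upper_tail_le hf (by linarith) (by linarith [hmean.2])
    _ = exp (-4 * b ^ 2 / Fintype.card ι) * #(matchings V k) := by ring_nf
    _ ≤ exp (-4 * b ^ 2 / Fintype.card ι) *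
          (2 * #{B ∈ matchings V k | |tupleWeight f B - 2 * b| ≤ b}) := by
        gcongr
        exact card_matchings_le_two_mul_card_central hf hb hbn hmean
    _ = _ := by ring

theorem card_big_le_card_central [Nonempty ι] (hf : ∀ i S, f i S ∈ Set.Icc (0 : ℝ) 1) {b : ℝ}
    (hb : 4 ≤ b) (hbn : 16 * Fintype.card ι ≤ b ^ 2)
    (hmean : 𝔼 B ∈ matchings V k, tupleWeight f B ≤ 2 * b) :
    (#{B ∈ matchings V k | 4 * b ≤ tupleWeight f B} : ℝ) ≤
      2 * exp (-4 * b ^ 2 / Fintype.card ι) *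
        #{B ∈ matchings V k | |tupleWeight f B - 2 * b| ≤ b} := by
  set κ := 2 * exp (-4 * b ^ 2 / Fintype.card ι)
  let φ (y : ℝ) : ℝ := κ * (if |y - 2 * b| ≤ b then 1 else 0) - if 4 * b ≤ y then 1 else 0
  have sum_φ (V : Finset α) (k : ι → ℕ) (f : ι → Finset α → ℝ) :
      ∑ B ∈ matchings V k, φ (tupleWeight f B) =
        κ * #{B ∈ matchings V k | |tupleWeight f B - 2 * b| ≤ b} -
          #{B ∈ matchings V k | 4 * b ≤ tupleWeight f B} := by
    simp only [φ, sum_sub_distrib, ← mul_sum, sum_boole]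
  rw [← sub_nonneg, ← sum_φ]
  refine sum_matchings_nonneg_of_expect_le (c := 2 * b) (fun y hy => ?_)
    (fun V k f hf hmean => ?_) hf hmean
  · simp only [φ, if_neg (show ¬4 * b ≤ y by linarith), sub_zero]
    positivity
  · rw [sum_φ, sub_nonneg]
    exact card_big_le_card_central_of_expect_mem_Icc hf hb hbn hmean

theorem expect_tupleWeight (hM : (matchings V k).Nonempty) (f : ι → Finset α → ℝ) :
    𝔼 B ∈ matchings V k, tupleWeight f B = ∑ i, 𝔼 S ∈ V.powersetCard (k i), f i S := by
  simp only [tupleWeight, expect_sum_comm, expect_matchings_eval hM]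

end BigVersusCentral

theorem expect_ite_mem {α : Type*} [DecidableEq α] {V : Finset α} {l : ℕ} {G : Finset (Finset α)}
    (hG : G ⊆ V.powersetCard l) :
    𝔼 S ∈ V.powersetCard l, (if S ∈ G then (1 : ℝ) else 0) = #G / (#V).choose l := by
  rw [expect_eq_sum_div_card, sum_boole, filter_mem_eq_inter, inter_eq_right.mpr hG,
    card_powersetCard]

theorem tupleSpace_eq_matchings (m l t : ℕ) :
    tupleSpace m l t = matchings (range m) fun _ : Fin t => l := by
  ext B
  simp only [tupleSpace, matchings, mem_filter]

theorem tupleWeight_ite_mem_eq_hits (G : Finset (Finset ℕ)) {t : ℕ} (B : Fin t → Finset ℕ) :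
    tupleWeight (fun _ S => if S ∈ G then 1 else 0) B = hits G B := by
  rw [tupleWeight, sum_boole, hits]

theorem big_versus_very_big_general {ι α : Type*} [Fintype ι] [DecidableEq ι] [DecidableEq α]
    (V : Finset α) (k : ι → ℕ) (f : ι → Finset α → ℝ) (hf : ∀ i S, f i S ∈ Set.Icc (0 : ℝ) 1)
    (C : ℝ) (hC0 : 0 < C)
    (hC : ∑ i, 𝔼 S ∈ V.powersetCard (k i), f i S ≤ 2 * C * Fintype.card ι)
    (hCt : 16 ≤ C ^ 2 * Fintype.card ι) :
    (#{B ∈ matchings V k | 4 * C * Fintype.card ι ≤ tupleWeight f B} : ℝ) / #(matchings V k) ≤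
      2 * Real.exp (-4 * (C ^ 2 * Fintype.card ι)) *
        (#{B ∈ matchings V k |
            |tupleWeight f B - 2 * C * Fintype.card ι| ≤ C * Fintype.card ι} /
          #(matchings V k)) := by
  obtain hM | hM := (matchings V k).eq_empty_or_nonempty
  · simp [hM]
  have : Nonempty ι := by
    by_contra! h
    norm_num [Fintype.card_eq_zero] at hCt
  have card_ge : (1 : ℝ) ≤ Fintype.card ι := Nat.one_le_cast.mpr Fintype.card_pos
  have b_sq : 16 * Fintype.card ι ≤ (C * Fintype.card ι) ^ 2 := by nlinarith
  have b_ge : 4 ≤ C * Fintype.card ι := by nlinarith [mul_pos hC0 (zero_lt_one.trans_le card_ge)]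
  have exponent : -4 * (C * Fintype.card ι) ^ 2 / Fintype.card ι =
      -4 * (C ^ 2 * Fintype.card ι) := by field_simp
  have := card_big_le_card_central hf b_ge b_sq (by rwa [expect_tupleWeight hM, ← mul_assoc])
  rw [exponent, ← mul_assoc 4, ← mul_assoc 2 C] at this
  rw [← mul_div_assoc]
  gcongr

theorem big_versus_very_big (m l t : ℕ) (hm : 0 < m) (hl : 0 < l) (ht : 0 < t)
    (hml : t * l ≤ m) (G : Finset (Finset ℕ)) (hG : G ⊆ (Finset.range m).powersetCard l)
    (α : ℝ) (hα : α = (G.card : ℝ) / (m.choose l : ℝ))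
    (C : ℝ) (hC0 : 0 < C) (hC1 : C ≤ 1 / 2) (hCα : α ≤ C) (hCt : 16 ≤ C ^ 2 * t) :
    (((tupleSpace m l t).filter fun B => 4 * C * t ≤ (hits G B : ℝ)).card : ℝ) /
        ((tupleSpace m l t).card : ℝ) ≤
      2 * Real.exp (-(C ^ 2 * t) / 2) *
        ((((tupleSpace m l t).filter
              fun B => |(hits G B : ℝ) - 2 * C * t| ≤ C * t).card : ℝ) /
          ((tupleSpace m l t).card : ℝ)) := by
  have mean : ∑ _i : Fin t, 𝔼 S ∈ (range m).powersetCard l, (if S ∈ G then (1 : ℝ) else 0) ≤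
      2 * C * Fintype.card (Fin t) := by
    rw [expect_ite_mem hG, card_range, ← hα, sum_const, card_univ, nsmul_eq_mul]
    nlinarith
  have strong := big_versus_very_big_general (range m) (fun _ => l)
    (fun _ S => if S ∈ G then 1 else 0) (fun _ S => by split_ifs <;> simp) C hC0 mean
    (by rwa [Fintype.card_fin])
  simp only [tupleWeight_ite_mem_eq_hits, Fintype.card_fin] at strong
  rw [tupleSpace_eq_matchings]
  refine strong.trans ?_
  gcongr ?_ * Real.exp ?_ * ?_
  linarith
end

section
/- For any ε > 0 there exists s₀ ∈ ℕ such that the following holds for any integer s ≥ s₀. Let Y be a finite set, l, t positive integers with |Y| ≥ tl, and let F_1, …, F_{s+1} be families of l-element subsets of Y that are cross-dependent and nested. Suppose |F_{s+1}| = α·C(|Y|, l), and that for some reals x, q with 1 ≤ x ≤ s+1 and 1 ≤ q ≤ s+1 one has (α + ε)·t ≤ s·x/q and t ≥ s + x + 1. Then |F_1| + |F_2| + … + |F_s| + q·|F_{s+1}| ≤ s·C(|Y|, l), where C(a,b) denotes the binomial coefficient. -/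
open Finset

/-!
Place `t ≥ s + x + 1` disjoint `l`-element blocks uniformly at random in `Y`, and let `h i` be the
number of blocks that belong to `F i`. Cross-dependence leaves the nested sets of blocks so obtained
without a system of distinct representatives, so Hall's theorem gives some `j ≤ s` with
`h (s + 1) ≤ j` and `h 1 + ⋯ + h s ≤ s t - j (t - j)`. As long as `h (s + 1)` does not exceed its
mean `α t` by more than `ε t / 2`, the gain `j (t - j)` beats `q h (s + 1)`, with a little to spare.

Larger values of `h (s + 1)` are rare: the action of the Kneser matrix is triangular with respect to
the degree filtration of the functions on `l`-element sets, which yields its eigenvalues. On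
functions of mean zero they are so small that two disjoint blocks are almost uncorrelated, and
`h (s + 1)` has variance at most `2 α t`. For large `s` what is spared in the typical case pays for
the rare one, and taking expectations gives the claim.
-/

open scoped BigOperators Matrix Pointwise

section Spectral

lemma exists_eq_of_hasEigenvalue_of_filtration {K V : Type*} [Field K] [AddCommGroup V] [Module K V]
    {f : Module.End K V} {W : ℕ → Submodule K V} {c : ℕ → K} {m : ℕ} (hbot : W 0 = ⊥)
    (htop : W m = ⊤) (hW : ∀ j < m, ∀ v ∈ W (j + 1), f v - c j • v ∈ W j) {μ : K}
    (hμ : f.HasEigenvalue μ) : ∃ j < m, μ = c j := by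
  obtain ⟨v, hv⟩ := hμ.exists_hasEigenvector
  by_contra! hne
  have descend : ∀ j < m, v ∈ W (j + 1) → v ∈ W j := fun j hj hvj ↦ by
    have h := hW j hj v hvj
    rw [hv.apply_eq_smul, ← sub_smul] at h
    exact ((W j).smul_mem_iff (sub_ne_zero.2 (hne j hj))).1 h
  have hv0 : v ∈ W 0 :=
    Nat.decreasingInduction (motive := fun j _ ↦ v ∈ W j) descend (by simp [htop]) m.zero_le
  exact hv.2 (by simpa [hbot] using hv0)

lemma dotProduct_mulVec_le_of_hasEigenvalue_le {n : Type*} [Fintype n] {A : Matrix n n ℝ}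
    (hA : A.IsHermitian) {c : ℝ} (hc : ∀ μ, Module.End.HasEigenvalue A.mulVecLin μ → μ ≤ c)
    (f : n → ℝ) : f ⬝ᵥ A *ᵥ f ≤ c * (f ⬝ᵥ f) := by
  classical
  have hpsd : (algebraMap ℝ (Matrix n n ℝ) c - A).PosSemidef := by
    refine Matrix.posSemidef_iff_isHermitian_and_spectrum_nonneg.2
      ⟨(Matrix.isHermitian_diagonal _).sub hA, ?_⟩
    rw [← spectrum.singleton_sub_eq, Set.singleton_sub]
    rintro _ ⟨μ, hμ, rfl⟩
    rw [← Matrix.spectrum_toLin', ← Module.End.hasEigenvalue_iff_mem_spectrum] at hμ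
    exact sub_nonneg.2 (hc μ hμ)
  have h := hpsd.dotProduct_mulVec_nonneg f
  rw [star_trivial, Matrix.sub_mulVec, dotProduct_sub, sub_nonneg] at h
  simpa [Algebra.algebraMap_eq_smul_one, Matrix.smul_mulVec] using h

end Spectral

section Kneser

variable {α : Type*} {l : ℕ}

lemma choose_sub_sub_mul_le {m j : ℕ} (hj : 1 ≤ j) (hjl : j ≤ l) (hlm : l ≤ m) :
    m * (m - j).choose (l - j) ≤ l * m.choose l := by
  have hmono : (m - j).choose (l - j) ≤ (m - 1).choose (l - 1) := by
    rw [← Nat.choose_symm_of_eq_add (show m - j = (m - l) + (l - j) by omega),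
      ← Nat.choose_symm_of_eq_add (show m - 1 = (m - l) + (l - 1) by omega)]
    exact Nat.choose_mono _ (by omega)
  have habsorb := Nat.add_one_mul_choose_eq (m - 1) (l - 1)
  rw [Nat.sub_add_cancel (by omega), Nat.sub_add_cancel (by omega)] at habsorb
  calc m * (m - j).choose (l - j) ≤ m * (m - 1).choose (l - 1) := Nat.mul_le_mul_left m hmono
    _ = l * m.choose l := by rw [habsorb, mul_comm]

lemma vecMulVec_one_one_mulVec {n R : Type*} [Fintype n] [CommSemiring R] (f : n → R) :
    Matrix.vecMulVec 1 1 *ᵥ f = (∑ i, f i) • (1 : n → R) := by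
  ext
  rw [Matrix.vecMulVec_mulVec, one_dotProduct]
  simp

variable [DecidableEq α]

lemma sum_powerset_neg_one_pow_card_of_subset (J A : Finset α) :
    ∑ I ∈ J.powerset with I ⊆ A, (-1 : ℝ) ^ #I = if Disjoint J A then 1 else 0 := by
  have hfilter : {I ∈ J.powerset | I ⊆ A} = (J ∩ A).powerset := by
    ext I
    rw [mem_filter, mem_powerset, mem_powerset, subset_inter_iff]
  simp only [hfilter, disjoint_iff_inter_eq_empty]
  exact_mod_cast congrArg (Int.cast (R := ℝ)) (sum_powerset_neg_one_pow_card (x := J ∩ A))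

variable (α l) in
/-- The adjacency matrix of the Kneser graph on the `l`-element subsets of `α`. -/
def kneserMatrix : Matrix (Set.powersetCard α l) (Set.powersetCard α l) ℝ :=
  Matrix.of fun A B ↦ if Disjoint A.1 B.1 then 1 else 0

lemma isHermitian_kneserMatrix : (kneserMatrix α l).IsHermitian := by
  ext A B
  simp [kneserMatrix, disjoint_comm]

variable (l) in
/-- The indicator, among the `l`-element sets, of those that contain `J`. -/
def supersetIndicator (J : Finset α) : Set.powersetCard α l → ℝ :=
  fun A ↦ if J ⊆ A.1 then 1 else 0

variable (α l) in
/-- The functions on `l`-element sets that are polynomials of degree less than `j` in the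
membership indicators of the elements of `α`. -/
def lowDegree (j : ℕ) : Submodule ℝ (Set.powersetCard α l → ℝ) :=
  Submodule.span ℝ (supersetIndicator l '' {J | #J < j})

lemma supersetIndicator_mem_lowDegree {J : Finset α} {j : ℕ} (hJ : #J < j) :
    supersetIndicator l J ∈ lowDegree α l j :=
  Submodule.subset_span ⟨J, hJ, rfl⟩

lemma supersetIndicator_empty : supersetIndicator l (∅ : Finset α) = 1 := by
  ext A
  simp [supersetIndicator]

lemma lowDegree_zero : lowDegree α l 0 = ⊥ := by
  simp [lowDegree]

lemma lowDegree_mono {i j : ℕ} (hij : i ≤ j) : lowDegree α l i ≤ lowDegree α l j :=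
  Submodule.span_mono (Set.image_mono fun _ hJ ↦ hJ.trans_le hij)

lemma lowDegree_one : lowDegree α l 1 = Submodule.span ℝ {1} := by
  simp [lowDegree, supersetIndicator_empty]

lemma lowDegree_add_one_eq_top [Finite α] : lowDegree α l (l + 1) = ⊤ := by
  classical
  have := Fintype.ofFinite α
  refine eq_top_iff.2 fun f _ ↦ ?_
  have hindicator (A : Set.powersetCard α l) : supersetIndicator l A.1 = Pi.single A 1 := by
    ext B
    simp only [supersetIndicator, ← Set.powersetCard.eq_iff_subset, Pi.single_apply, eq_comm]
  rw [← univ_sum_single f]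
  refine Submodule.sum_mem _ fun A _ ↦ ?_
  rw [← mul_one (f A), ← smul_eq_mul, Pi.single_smul, ← hindicator]
  exact Submodule.smul_mem _ _ (supersetIndicator_mem_lowDegree (by simp))

variable [Fintype α]

lemma card_filter_disjoint_and_subset {J : Finset α} (hJ : #J ≤ l) (A : Set.powersetCard α l) :
    #{B : Set.powersetCard α l | Disjoint A.1 B.1 ∧ J ⊆ B.1} =
      if Disjoint J A.1 then (Fintype.card α - l - #J).choose (l - #J) else 0 := by
  split_ifs with h
  · have hJA : J ⊆ (A.1)ᶜ := subset_compl_iff_disjoint_right.2 h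
    have hcompl : #(A.1)ᶜ = Fintype.card α - l := by rw [card_compl, Set.powersetCard.card_eq A]
    rw [← hcompl, ← card_filter_powersetCard_subset J (A.1)ᶜ l hJA hJ]
    refine card_bij (fun B _ ↦ B.1) (fun B hB ↦ ?_) (fun _ _ _ _ ↦ Subtype.ext) fun B hB ↦ ?_
    · simpa [disjoint_comm, subset_compl_iff_disjoint_right] using hB
    · simp only [mem_filter, mem_powersetCard, subset_compl_iff_disjoint_left] at hB
      exact ⟨⟨B, hB.1.2⟩, by simpa using ⟨hB.1.1, hB.2⟩, rfl⟩
  · rw [card_eq_zero, filter_eq_empty_iff]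
    exact fun B _ hB ↦ h (hB.1.mono_right hB.2).symm

lemma kneserMatrix_mulVec_supersetIndicator {J : Finset α} (hJ : #J ≤ l) :
    kneserMatrix α l *ᵥ supersetIndicator l J =
      ((Fintype.card α - l - #J).choose (l - #J) : ℝ) •
        ∑ I ∈ J.powerset, (-1 : ℝ) ^ #I • supersetIndicator l I := by
  ext A
  have hcount : (kneserMatrix α l *ᵥ supersetIndicator l J) A =
      #{B : Set.powersetCard α l | Disjoint A.1 B.1 ∧ J ⊆ B.1} := by
    simp only [Matrix.mulVec, dotProduct, kneserMatrix, supersetIndicator, Matrix.of_apply,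
      mul_ite, mul_one, mul_zero, ← ite_and, sum_boole]
    simp only [and_comm]
  have hincl_excl : (∑ I ∈ J.powerset, (-1 : ℝ) ^ #I • supersetIndicator l I) A =
      if Disjoint J A.1 then 1 else 0 := by
    simp only [← sum_powerset_neg_one_pow_card_of_subset, sum_filter, Finset.sum_apply,
      Pi.smul_apply, supersetIndicator, smul_eq_mul, mul_ite, mul_one, mul_zero]
  rw [hcount, card_filter_disjoint_and_subset hJ, Pi.smul_apply, hincl_excl]
  simp

lemma kneserMatrix_mulVec_one :
    kneserMatrix α l *ᵥ 1 = ((Fintype.card α - l).choose l : ℝ) • 1 := by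
  simpa [supersetIndicator_empty] using
    kneserMatrix_mulVec_supersetIndicator (α := α) (l := l) (J := ∅) (by simp)

lemma kneserMatrix_mulVec_sub_smul_mem_lowDegree {j : ℕ} (hj : j ≤ l)
    {f : Set.powersetCard α l → ℝ} (hf : f ∈ lowDegree α l (j + 1)) :
    kneserMatrix α l *ᵥ f - ((-1) ^ j * (Fintype.card α - l - j).choose (l - j) : ℝ) • f ∈
      lowDegree α l j := by
  set c : ℝ := (-1) ^ j * (Fintype.card α - l - j).choose (l - j)
  suffices lowDegree α l (j + 1) ≤
      (lowDegree α l j).comap ((kneserMatrix α l).mulVecLin - c • LinearMap.id) from this hf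
  refine Submodule.span_le.2 ?_
  rintro _ ⟨J, hJ, rfl⟩
  have hJj : #J ≤ j := Nat.le_of_lt_succ hJ
  have hproper : ∑ I ∈ J.powerset.erase J, (-1 : ℝ) ^ #I • supersetIndicator l I ∈
      lowDegree α l j := by
    refine Submodule.sum_mem _ fun I hI ↦ Submodule.smul_mem _ _ ?_
    have hIJ : I ⊂ J := mem_ssubsets.1 hI
    exact supersetIndicator_mem_lowDegree ((card_lt_card hIJ).trans_le hJj)
  simp only [SetLike.mem_coe, Submodule.mem_comap, LinearMap.sub_apply, Matrix.mulVecLin_apply,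
    LinearMap.smul_apply, LinearMap.id_apply, kneserMatrix_mulVec_supersetIndicator (hJj.trans hj)]
  rw [← sum_erase_add _ _ (mem_powerset_self J), smul_add, add_sub_assoc]
  refine Submodule.add_mem _ (Submodule.smul_mem _ _ hproper) ?_
  rcases hJj.lt_or_eq with hlt | rfl
  · have hJmem := supersetIndicator_mem_lowDegree (l := l) hlt
    exact Submodule.sub_mem _ (Submodule.smul_mem _ _ (Submodule.smul_mem _ _ hJmem))
      (Submodule.smul_mem _ _ hJmem)
  · simp [c, smul_smul, mul_comm]

lemma vecMulVec_one_one_mulVec_sub_smul_mem_lowDegree (j : ℕ) {f : Set.powersetCard α l → ℝ}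
    (hf : f ∈ lowDegree α l (j + 1)) :
    Matrix.vecMulVec 1 1 *ᵥ f - (if j = 0 then ((Fintype.card α).choose l : ℝ) else 0) • f ∈
      lowDegree α l j := by
  rw [vecMulVec_one_one_mulVec]
  rcases j.eq_zero_or_pos with rfl | hj
  · rw [zero_add, lowDegree_one, Submodule.mem_span_singleton] at hf
    obtain ⟨a, rfl⟩ := hf
    have hcard : Fintype.card (Set.powersetCard α l) = (Fintype.card α).choose l := by
      rw [← Nat.card_eq_fintype_card, Set.powersetCard.card, Nat.card_eq_fintype_card]
    simp [smul_smul, hcard]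
  · have hone : (1 : Set.powersetCard α l → ℝ) ∈ lowDegree α l j :=
      lowDegree_mono hj (lowDegree_one.ge (Submodule.mem_span_singleton_self 1))
    simpa [hj.ne'] using Submodule.smul_mem _ _ hone

-- Subtracting the all-ones matrix removes the top eigenvalue, which belongs to the constants.
lemma le_of_hasEigenvalue_kneserMatrix_sub (hl : 2 * l ≤ Fintype.card α) {μ : ℝ}
    (hμ : Module.End.HasEigenvalue (kneserMatrix α l - Matrix.vecMulVec 1 1).mulVecLin μ) :
    μ ≤ l / (Fintype.card α - l : ℕ) * (Fintype.card α - l).choose l := by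
  set n := Fintype.card α
  let c (j : ℕ) : ℝ :=
    (-1) ^ j * (n - l - j).choose (l - j) - if j = 0 then (n.choose l : ℝ) else 0
  have hact : ∀ j < l + 1, ∀ f ∈ lowDegree α l (j + 1),
      (kneserMatrix α l - Matrix.vecMulVec 1 1).mulVecLin f - c j • f ∈ lowDegree α l j := by
    intro j hj f hf
    have hK := kneserMatrix_mulVec_sub_smul_mem_lowDegree (Nat.le_of_lt_succ hj) hf
    have hJ := vecMulVec_one_one_mulVec_sub_smul_mem_lowDegree j hf
    convert Submodule.sub_mem _ hK hJ using 1
    rw [Matrix.mulVecLin_apply, Matrix.sub_mulVec, sub_smul]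
    abel
  obtain ⟨j, hj, rfl⟩ := exists_eq_of_hasEigenvalue_of_filtration
    lowDegree_zero lowDegree_add_one_eq_top hact hμ
  rcases j.eq_zero_or_pos with rfl | hj0
  · have hchoose : ((n - l).choose l : ℝ) ≤ n.choose l := by
      exact_mod_cast Nat.choose_mono l (n.sub_le l)
    have hbound : (0 : ℝ) ≤ l / (n - l : ℕ) * (n - l).choose l := by positivity
    simp only [c, pow_zero, one_mul, Nat.sub_zero, if_true]
    linarith
  · have hle := choose_sub_sub_mul_le hj0 (Nat.le_of_lt_succ hj) (show l ≤ n - l by omega)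
    have hpos : (0 : ℝ) < (n - l : ℕ) := by exact_mod_cast (show 0 < n - l by omega)
    calc c j ≤ (n - l - j).choose (l - j) := by
          rw [show c j = (-1) ^ j * (n - l - j).choose (l - j) by simp [c, hj0.ne']]
          exact mul_le_of_le_one_left (by positivity) ((le_abs_self _).trans_eq (by simp))
      _ ≤ l / (n - l : ℕ) * (n - l).choose l := by
          rw [div_mul_eq_mul_div, le_div_iff₀' hpos]
          exact_mod_cast hle

lemma dotProduct_kneserMatrix_mulVec_le (hl : 2 * l ≤ Fintype.card α)
    {f : Set.powersetCard α l → ℝ} (hf : ∑ A, f A = 0) :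
    f ⬝ᵥ kneserMatrix α l *ᵥ f ≤
      l / (Fintype.card α - l : ℕ) * (Fintype.card α - l).choose l * (f ⬝ᵥ f) := by
  have hherm : (kneserMatrix α l - Matrix.vecMulVec 1 1).IsHermitian := by
    refine isHermitian_kneserMatrix.sub ?_
    ext A B
    simp [Matrix.vecMulVec_apply]
  have h := dotProduct_mulVec_le_of_hasEigenvalue_le hherm
    (fun _ ↦ le_of_hasEigenvalue_kneserMatrix_sub hl) f
  rwa [Matrix.sub_mulVec, vecMulVec_one_one_mulVec, hf, zero_smul, sub_zero] at h

end Kneser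

section Placement

lemma expect_smul_eq_expect {G X : Type*} [Group G] [Fintype G] [MulAction G X] {S : Finset X}
    (hS : ∀ x ∈ S, ∀ g : G, g • x ∈ S) (htrans : ∀ x ∈ S, ∀ y ∈ S, ∃ g : G, g • x = y)
    {x : X} (hx : x ∈ S) (f : X → ℝ) : 𝔼 g : G, f (g • x) = 𝔼 y ∈ S, f y := by
  have hindep : ∀ y ∈ S, 𝔼 g : G, f (g • y) = 𝔼 g : G, f (g • x) := by
    intro y hy
    obtain ⟨h, rfl⟩ := htrans x hx y hy
    exact Fintype.expect_equiv (Equiv.mulRight h) _ _ fun g ↦ by simp [mul_smul]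
  have hreindex (g : G) : 𝔼 y ∈ S, f (g • y) = 𝔼 y ∈ S, f y :=
    expect_nbij' (g • ·) (g⁻¹ • ·) (fun y hy ↦ hS y hy g) (fun y hy ↦ hS y hy g⁻¹)
      (by simp) (by simp) (by simp)
  calc 𝔼 g : G, f (g • x) = 𝔼 y ∈ S, 𝔼 g : G, f (g • y) := by
        rw [expect_congr rfl hindep, expect_const ⟨x, hx⟩]
    _ = 𝔼 g : G, 𝔼 y ∈ S, f (g • y) := expect_comm ..
    _ = 𝔼 y ∈ S, f y := by simp [hreindex]

lemma disjoint_smul_finset_iff {G α : Type*} [Group G] [MulAction G α] [DecidableEq α] (g : G)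
    {A B : Finset α} : Disjoint (g • A) (g • B) ↔ Disjoint A B := by
  simp [disjoint_iff_inter_eq_empty, ← smul_finset_inter]

variable {α : Type*} {l : ℕ}

lemma card_mul_le_of_pairwise_disjoint [Fintype α] {ι : Type*} [Fintype ι]
    {P : ι → Set.powersetCard α l} (hP : Pairwise fun i j ↦ Disjoint (P i).1 (P j).1) :
    Fintype.card ι * l ≤ Fintype.card α := by
  classical
  calc Fintype.card ι * l = #(univ.biUnion fun i ↦ (P i).1) := by
        rw [card_biUnion fun i _ j _ hij ↦ hP hij, ← smul_eq_mul, ← card_univ]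
        exact (sum_const_nat fun i _ ↦ (P i).2).symm
    _ ≤ Fintype.card α := card_le_univ _

lemma exists_pairwise_disjoint_powersetCard [Fintype α] {t : ℕ} (h : t * l ≤ Fintype.card α) :
    ∃ P : Fin t → Set.powersetCard α l, Pairwise fun i j ↦ Disjoint (P i).1 (P j).1 := by
  obtain ⟨e⟩ : Nonempty (Fin t × Fin l ↪ α) :=
    Function.Embedding.nonempty_of_card_le (by simpa using h)
  refine ⟨fun i ↦ ⟨univ.map ((Function.Embedding.sectR i (Fin l)).trans e), by simp⟩,
    fun i j hij ↦ disjoint_left.2 ?_⟩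
  simp only [mem_map]
  rintro _ ⟨a, -, rfl⟩ ⟨b, -, hb⟩
  exact hij (congrArg Prod.fst (e.injective hb)).symm

variable [DecidableEq α]

lemma exists_perm_smul_eq_of_disjoint [Finite α] {P Q P' Q' : Set.powersetCard α l}
    (hPQ : Disjoint P.1 Q.1) (hPQ' : Disjoint P'.1 Q'.1) :
    ∃ σ : Equiv.Perm α, σ • P = P' ∧ σ • Q = Q' := by
  have hinj {R S : Set.powersetCard α l} (hRS : Disjoint R.1 S.1) {e : P.1 ≃ R.1} {d : Q.1 ≃ S.1} :
      Function.Injective (Sum.elim (fun a ↦ (e a : α)) (fun a ↦ (d a : α))) :=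
    (Subtype.val_injective.comp e.injective).sumElim (Subtype.val_injective.comp d.injective)
      fun a b ↦ disjoint_iff_ne.1 hRS _ (e a).2 _ (d b).2
  let eP : P.1 ≃ P'.1 := equivOfCardEq (P.2.trans P'.2.symm)
  let eQ : Q.1 ≃ Q'.1 := equivOfCardEq (Q.2.trans Q'.2.symm)
  obtain ⟨σ, hσ⟩ := Equiv.Perm.exists_extending_pair _ _
    (hinj hPQ (e := .refl _) (d := .refl _)) (hinj hPQ' (e := eP) (d := eQ))
  refine ⟨σ, Set.powersetCard.eq_iff_subset.2 ?_, Set.powersetCard.eq_iff_subset.2 ?_⟩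
  all_goals
    intro b hb
    rw [Set.powersetCard.coe_smul] at hb
    obtain ⟨a, ha, rfl⟩ := mem_smul_finset.1 hb
  · rw [show σ • a = eP ⟨a, ha⟩ from hσ (.inl ⟨a, ha⟩)]
    exact (eP _).2
  · rw [show σ • a = eQ ⟨a, ha⟩ from hσ (.inr ⟨a, ha⟩)]
    exact (eQ _).2

variable [Fintype α]

lemma expect_perm_smul (P : Set.powersetCard α l) (f : Set.powersetCard α l → ℝ) :
    𝔼 σ : Equiv.Perm α, f (σ • P) = 𝔼 A, f A := by
  have := Set.powersetCard.isPretransitive (α := α) (n := l)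
  exact expect_smul_eq_expect (by simp) (fun A _ B _ ↦ MulAction.exists_smul_eq _ A B)
    (mem_univ P) f

lemma sum_disjoint_mul (f g : Set.powersetCard α l → ℝ) :
    ∑ p : Set.powersetCard α l × Set.powersetCard α l with Disjoint p.1.1 p.2.1, f p.1 * g p.2 =
      f ⬝ᵥ kneserMatrix α l *ᵥ g := by
  simp [sum_filter, Fintype.sum_prod_type, dotProduct, Matrix.mulVec, kneserMatrix, mul_sum]

lemma expect_perm_smul_mul_smul {P Q : Set.powersetCard α l} (hPQ : Disjoint P.1 Q.1)
    (f : Set.powersetCard α l → ℝ) :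
    𝔼 σ : Equiv.Perm α, f (σ • P) * f (σ • Q) =
      f ⬝ᵥ kneserMatrix α l *ᵥ f / (1 ⬝ᵥ kneserMatrix α l *ᵥ 1) := by
  let S : Finset (Set.powersetCard α l × Set.powersetCard α l) := {p | Disjoint p.1.1 p.2.1}
  have hS : ∀ p ∈ S, ∀ σ : Equiv.Perm α, σ • p ∈ S := by
    intro p hp σ
    simpa [S, disjoint_smul_finset_iff] using hp
  have htrans : ∀ p ∈ S, ∀ p' ∈ S, ∃ σ : Equiv.Perm α, σ • p = p' := by
    intro p hp p' hp'
    obtain ⟨σ, h₁, h₂⟩ := exists_perm_smul_eq_of_disjoint (mem_filter.1 hp).2 (mem_filter.1 hp').2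
    exact ⟨σ, Prod.ext h₁ h₂⟩
  have hcard : (#S : ℝ) = 1 ⬝ᵥ kneserMatrix α l *ᵥ 1 := by
    simp [S, ← sum_disjoint_mul]
  rw [← sum_disjoint_mul, ← hcard, ← expect_eq_sum_div_card]
  exact expect_smul_eq_expect hS htrans (x := (P, Q)) (by simpa [S] using hPQ)
    fun p ↦ f p.1 * f p.2

lemma expect_perm_smul_mul_smul_le {P Q : Set.powersetCard α l} (hPQ : Disjoint P.1 Q.1)
    {f : Set.powersetCard α l → ℝ} (hf : ∑ A, f A = 0) :
    𝔼 σ : Equiv.Perm α, f (σ • P) * f (σ • Q) ≤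
      l / (Fintype.card α - l : ℕ) * 𝔼 A, f A ^ 2 := by
  have hl : 2 * l ≤ Fintype.card α := by
    have h := card_le_univ (P.1 ∪ Q.1)
    rwa [card_union_of_disjoint hPQ, P.2, Q.2, ← two_mul] at h
  have hN : (0 : ℝ) < (Fintype.card α - l).choose l := by
    exact_mod_cast Nat.choose_pos (by omega)
  have hcard : (0 : ℝ) < Fintype.card (Set.powersetCard α l) := by
    exact_mod_cast Fintype.card_pos_iff.2 ⟨P⟩
  calc 𝔼 σ : Equiv.Perm α, f (σ • P) * f (σ • Q)
      = f ⬝ᵥ kneserMatrix α l *ᵥ f /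
          ((Fintype.card α - l).choose l * Fintype.card (Set.powersetCard α l)) := by
        rw [expect_perm_smul_mul_smul hPQ, kneserMatrix_mulVec_one]
        simp [dotProduct_smul]
    _ ≤ l / (Fintype.card α - l : ℕ) * (Fintype.card α - l).choose l * (f ⬝ᵥ f) /
          ((Fintype.card α - l).choose l * Fintype.card (Set.powersetCard α l)) := by
        gcongr
        exact dotProduct_kneserMatrix_mulVec_le hl hf
    _ = l / (Fintype.card α - l : ℕ) * 𝔼 A, f A ^ 2 := by
        simp only [Fintype.expect_eq_sum_div_card, dotProduct, sq]
        field_simp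

lemma expect_sq_sum_perm_smul_le {ι : Type*} [Fintype ι] {P : ι → Set.powersetCard α l}
    (hP : Pairwise fun i j ↦ Disjoint (P i).1 (P j).1)
    {f : Set.powersetCard α l → ℝ} (hf : ∑ A, f A = 0) :
    𝔼 σ : Equiv.Perm α, (∑ i, f (σ • P i)) ^ 2 ≤ 2 * Fintype.card ι * 𝔼 A, f A ^ 2 := by
  classical
  set M := 𝔼 A, f A ^ 2
  have hM : 0 ≤ M := expect_nonneg fun A _ ↦ sq_nonneg (f A)
  set ρ : ℝ := l / (Fintype.card α - l : ℕ)
  have hrow (i : ι) : ∑ j, 𝔼 σ : Equiv.Perm α, f (σ • P i) * f (σ • P j) ≤ 2 * M := by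
    have hρ : #(univ.erase i) * ρ ≤ 1 := by
      rw [← mul_div_assoc]
      refine div_le_one_of_le₀ ?_ (Nat.cast_nonneg _)
      have h := card_mul_le_of_pairwise_disjoint hP
      rw [← card_univ, ← card_erase_add_one (mem_univ i), add_one_mul] at h
      exact_mod_cast Nat.le_sub_of_add_le h
    have hdiag : 𝔼 σ : Equiv.Perm α, f (σ • P i) * f (σ • P i) = M := by
      simp only [← sq, expect_perm_smul (P i) fun A ↦ f A ^ 2, M]
    have hoff : ∑ j ∈ univ.erase i, 𝔼 σ : Equiv.Perm α, f (σ • P i) * f (σ • P j) ≤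
        #(univ.erase i) • (ρ * M) :=
      sum_le_card_nsmul _ _ _ fun j hj ↦
        expect_perm_smul_mul_smul_le (hP (ne_of_mem_erase hj).symm) hf
    rw [← add_sum_erase _ _ (mem_univ i), hdiag]
    rw [nsmul_eq_mul, ← mul_assoc] at hoff
    linarith [mul_le_of_le_one_left hM hρ]
  calc 𝔼 σ : Equiv.Perm α, (∑ i, f (σ • P i)) ^ 2
      = ∑ i, ∑ j, 𝔼 σ : Equiv.Perm α, f (σ • P i) * f (σ • P j) := by
        simp only [sq, sum_mul_sum, expect_sum_comm]
    _ ≤ ∑ _i : ι, 2 * M := sum_le_sum fun i _ ↦ hrow i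
    _ = 2 * Fintype.card ι * M := by simp; ring

lemma card_filter_mem_eq_sum_indicator {ι X : Type*} [Fintype ι] [DecidableEq X] (f : ι → X)
    (S : Finset X) :
    (#{i | f i ∈ S} : ℝ) = ∑ i, (S : Set X).indicator 1 (f i) := by
  simp [Set.indicator_apply]

lemma expect_card_filter_perm_smul_mem {ι : Type*} [Fintype ι] (P : ι → Set.powersetCard α l)
    (F : Finset (Set.powersetCard α l)) :
    𝔼 σ : Equiv.Perm α, (#{i | σ • P i ∈ F} : ℝ) = Fintype.card ι * F.dens := by
  simp only [card_filter_mem_eq_sum_indicator, expect_sum_comm,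
    expect_perm_smul _ (Set.indicator _ _), expect_indicator_one, sum_const, nsmul_eq_mul,
    card_univ]

lemma expect_sq_card_filter_perm_smul_mem_sub_le {ι : Type*} [Fintype ι]
    {P : ι → Set.powersetCard α l} (hP : Pairwise fun i j ↦ Disjoint (P i).1 (P j).1)
    (F : Finset (Set.powersetCard α l)) :
    𝔼 σ : Equiv.Perm α, ((#{i | σ • P i ∈ F} : ℝ) - Fintype.card ι * F.dens) ^ 2 ≤
      2 * Fintype.card ι * F.dens := by
  let ind : Set.powersetCard α l → ℝ := (F : Set (Set.powersetCard α l)).indicator 1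
  have hind : 𝔼 A, ind A = F.dens := expect_indicator_one F
  have hmean : ∑ A, (ind A - F.dens) = 0 := by
    rw [sum_sub_distrib, ← Fintype.card_smul_expect ind, hind, sum_const, card_univ, sub_self]
  have hvar : 𝔼 A, (ind A - F.dens) ^ 2 ≤ F.dens := by
    calc 𝔼 A, (ind A - F.dens) ^ 2 ≤ 𝔼 A, (ind A - 2 * F.dens * (ind A - F.dens)) := by
          refine expect_le_expect fun A _ ↦ ?_
          have hsq : ind A ^ 2 = ind A := by
            by_cases hA : A ∈ F <;> simp [ind, hA]
          nlinarith [sq_nonneg (F.dens : ℝ)]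
      _ = F.dens := by
          rw [expect_sub_distrib, ← mul_expect, Fintype.expect_eq_sum_div_card (fun A ↦ _ - _),
            hmean, hind]
          simp
  calc 𝔼 σ : Equiv.Perm α, ((#{i | σ • P i ∈ F} : ℝ) - Fintype.card ι * F.dens) ^ 2
      = 𝔼 σ : Equiv.Perm α, (∑ i, (ind (σ • P i) - F.dens)) ^ 2 := by
        simp [card_filter_mem_eq_sum_indicator, sum_sub_distrib, ind]
    _ ≤ 2 * Fintype.card ι * 𝔼 A, (ind A - F.dens) ^ 2 := expect_sq_sum_perm_smul_le hP hmean
    _ ≤ 2 * Fintype.card ι * F.dens := by gcongr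

end Placement

section Nested

lemma exists_injective_mem_of_sub_le_card {ι : Type*} {n : ℕ}
    {T : Fin n → Finset ι} (hT : ∀ i : Fin n, n - i ≤ #(T i)) :
    ∃ g : Fin n → ι, Function.Injective g ∧ ∀ i, g i ∈ T i := by
  classical
  refine (all_card_le_biUnion_card_iff_exists_injective T).1 fun S ↦ ?_
  rcases S.eq_empty_or_nonempty with rfl | hS
  · simp
  · calc #S ≤ #(Ici (S.min' hS)) := card_le_card fun i hi ↦ mem_Ici.2 (S.min'_le i hi)
      _ = n - S.min' hS := Fin.card_Ici _
      _ ≤ #(T (S.min' hS)) := hT _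
      _ ≤ #(S.biUnion T) := card_le_card (subset_biUnion_of_mem T (S.min'_mem hS))

lemma exists_sum_card_le_of_not_exists_injective {ι : Type*} [Fintype ι] {s : ℕ}
    {T : Fin (s + 1) → Finset ι} (hT : Antitone T)
    (hinj : ¬ ∃ g : Fin (s + 1) → ι, Function.Injective g ∧ ∀ i, g i ∈ T i) :
    ∃ j ≤ s, #(T (Fin.last s)) ≤ j ∧
      ∑ i : Fin s, #(T i.castSucc) ≤ (s - j) * Fintype.card ι + j * j := by
  obtain ⟨i, hi⟩ : ∃ i : Fin (s + 1), #(T i) < s + 1 - i := by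
    by_contra! h
    exact hinj (exists_injective_mem_of_sub_le_card h)
  refine ⟨s - i, by omega, ?_, ?_⟩
  · have hlast := card_le_card (hT (Fin.le_last i))
    omega
  have hterm (k : Fin s) : #(T k.castSucc) ≤ if (k : ℕ) < i then Fintype.card ι else s - i := by
    split_ifs with hk
    · exact card_le_univ _
    · have hle := card_le_card (hT (show i ≤ k.castSucc from not_lt.1 hk))
      omega
  have hlt : #{k : Fin s | (k : ℕ) < i} = i := by
    rw [Fin.card_filter_val_lt, min_eq_right i.is_le]
  have hge : #{k : Fin s | ¬ (k : ℕ) < i} = s - i := by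
    rw [filter_not, card_sdiff_of_subset (filter_subset _ _), hlt, card_univ, Fintype.card_fin]
  calc ∑ k : Fin s, #(T k.castSucc)
      ≤ ∑ k : Fin s, if (k : ℕ) < i then Fintype.card ι else s - i := sum_le_sum fun k _ ↦ hterm k
    _ = (s - (s - i)) * Fintype.card ι + (s - i) * (s - i) := by
        rw [sum_ite, sum_const, sum_const, hlt, hge, smul_eq_mul, smul_eq_mul,
          Nat.sub_sub_self i.is_le]

end Nested

section Numerics

variable {s t x q κ a j h : ℝ}

lemma mul_one_add_le_sub_of_mul_add_le (hκ : 0 ≤ κ) (hx : 0 ≤ x) (hq : 0 < q) (hqs : q ≤ s + 1)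
    (ht : s + x + 1 ≤ t) (hhs : h ≤ s) (hqh : q * (h + κ * t) ≤ s * x) : q * (1 + κ) ≤ t - h := by
  rcases le_total q x with hqx | hxq
  · have hpos : 0 < t := by linarith
    have hprod : (x + 1) * (s + 1) ≤ (t - h) * (t - q) := by
      apply mul_le_mul <;> linarith
    have hscaled : 0 ≤ t * (t - h - q * (1 + κ)) := by linarith
    linarith [nonneg_of_mul_nonneg_right hscaled hpos]
  · have hprod : 0 ≤ (q - x) * (s + 1 - q) := by
      apply mul_nonneg <;> linarith
    have hslack : 0 ≤ κ * q * (t - q) := mul_nonneg (by positivity) (by linarith)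
    have hqt : q * (s + x + 1) ≤ q * t := by gcongr
    have hscaled : 0 ≤ q * (t - h - q * (1 + κ)) := by linarith
    linarith [nonneg_of_mul_nonneg_right hscaled hq]

-- `j * (t - j)` is concave in `j`, so on `h ≤ j ≤ s` it is at least its value at `h` or at `s`.
lemma mul_one_add_mul_le_of_mul_add_le (hκ : 0 ≤ κ) (hx : 0 ≤ x) (hq : 0 < q) (hqs : q ≤ s + 1)
    (ht : s + x + 1 ≤ t) (hh : 0 ≤ h) (hhj : h ≤ j) (hjs : j ≤ s)
    (hqh : q * (h + κ * t) ≤ s * x) : q * (1 + κ) * h ≤ j * (t - j) := by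
  rcases le_total (j + h) t with hjh | hjh
  · have hconcave : 0 ≤ (j - h) * (t - j - h) := mul_nonneg (by linarith) (by linarith)
    calc q * (1 + κ) * h ≤ (t - h) * h := by
          gcongr
          exact mul_one_add_le_sub_of_mul_add_le hκ hx hq hqs ht (hhj.trans hjs) hqh
      _ ≤ j * (t - j) := by linarith
  · have hconcave : 0 ≤ (s - j) * (s + j - t) := mul_nonneg (by linarith) (by linarith)
    calc q * (1 + κ) * h = q * (h + κ * h) := by ring
      _ ≤ q * (h + κ * t) := by gcongr; linarith
      _ ≤ s * x := hqh
      _ ≤ s * (t - s) := by gcongr <;> linarith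
      _ ≤ j * (t - j) := by linarith

-- Where `h` exceeds `a t` by more than `κ t`, the quadratic term makes the left side nonpositive.
lemma mul_sub_mul_sq_le_mul_sub_sub_mul (hκ : 0 < κ) (hx : 0 ≤ x) (hq : 0 < q) (hqs : q ≤ s + 1)
    (ht : s + x + 1 ≤ t) (ha : (a + 2 * κ) * t ≤ s * x / q) (hh : 0 ≤ h) (hhj : h ≤ j)
    (hjs : j ≤ s) :
    q * (κ * h - (1 + κ) / (κ ^ 2 * t) * (h - a * t) ^ 2) ≤ j * (t - j) - q * h := by
  have hpos : 0 < t := by linarith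
  rcases le_or_gt h ((a + κ) * t) with hle | hgt
  · have hqh : q * (h + κ * t) ≤ s * x := by
      rw [le_div_iff₀' hq] at ha
      exact ha.trans' (by gcongr; linarith)
    have hmain := mul_one_add_mul_le_of_mul_add_le hκ.le hx hq hqs ht hh hhj hjs hqh
    have hsq : 0 ≤ q * ((1 + κ) / (κ ^ 2 * t) * (h - a * t) ^ 2) := by positivity
    linarith
  · have hdev : (κ * t) ^ 2 ≤ (h - a * t) ^ 2 := by gcongr; linarith
    have hh_le : (1 + κ) * h ≤ (1 + κ) / (κ ^ 2 * t) * (h - a * t) ^ 2 :=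
      calc (1 + κ) * h ≤ (1 + κ) * t := by gcongr; linarith
        _ = (1 + κ) / (κ ^ 2 * t) * (κ * t) ^ 2 := by field_simp
        _ ≤ (1 + κ) / (κ ^ 2 * t) * (h - a * t) ^ 2 := by gcongr
    have hjt : 0 ≤ j * (t - j) := mul_nonneg (hh.trans hhj) (by linarith)
    linarith [mul_le_mul_of_nonneg_left hh_le hq.le]

end Numerics

section CrossDependent

variable {α : Type*} {l s : ℕ}

/-- Families `F 0, …, F s` of `l`-element sets are cross-dependent if one cannot choose a member
of each so that the chosen sets are pairwise disjoint. -/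
def CrossDependent (F : Fin (s + 1) → Finset (Set.powersetCard α l)) : Prop :=
  ∀ A : Fin (s + 1) → Set.powersetCard α l, (∀ i, A i ∈ F i) →
    ¬ Pairwise fun i j ↦ Disjoint (A i).1 (A j).1

variable {F : Fin (s + 1) → Finset (Set.powersetCard α l)} {t : ℕ}
  {P : Fin t → Set.powersetCard α l}

lemma CrossDependent.exists_sum_card_le [DecidableEq α] (hF : CrossDependent F)
    (hnested : Antitone F) (hP : Pairwise fun i j ↦ Disjoint (P i).1 (P j).1) :
    ∃ j ≤ s, #{k | P k ∈ F (Fin.last s)} ≤ j ∧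
      ∑ i : Fin s, #{k | P k ∈ F i.castSucc} ≤ (s - j) * t + j * j := by
  have hnested' : Antitone fun i ↦ ({k | P k ∈ F i} : Finset (Fin t)) :=
    fun i i' hii' ↦ monotone_filter_right _ fun k _ hk ↦ hnested hii' hk
  simpa using exists_sum_card_le_of_not_exists_injective hnested' fun ⟨g, hg, hgF⟩ ↦
    hF (P ∘ g) (fun i ↦ by simpa using hgF i) fun i j hij ↦ hP (hg.ne hij)

variable {κ x q : ℝ}

lemma CrossDependent.sum_card_add_mul_card_le [DecidableEq α] (hF : CrossDependent F)
    (hnested : Antitone F) (hP : Pairwise fun i j ↦ Disjoint (P i).1 (P j).1) {a : ℝ}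
    (hκ : 0 < κ) (hx : 0 ≤ x) (hq : 0 < q) (hqs : q ≤ s + 1) (ht : s + x + 1 ≤ t)
    (ha : (a + 2 * κ) * t ≤ s * x / q) :
    ∑ i : Fin s, (#{k | P k ∈ F i.castSucc} : ℝ) + q * #{k | P k ∈ F (Fin.last s)} ≤
      s * t - q * (κ * #{k | P k ∈ F (Fin.last s)} -
        (1 + κ) / (κ ^ 2 * t) * (#{k | P k ∈ F (Fin.last s)} - a * t) ^ 2) := by
  obtain ⟨j, hjs, hlast, hsum⟩ := hF.exists_sum_card_le hnested hP
  have hsum' : ∑ i : Fin s, (#{k | P k ∈ F i.castSucc} : ℝ) ≤ (s - j) * t + j * j := by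
    rw [← Nat.cast_sub hjs]
    exact_mod_cast hsum
  have hloss := mul_sub_mul_sq_le_mul_sub_sub_mul hκ hx hq hqs ht ha (Nat.cast_nonneg _)
    (Nat.cast_le.2 hlast) (Nat.cast_le.2 hjs)
  linarith

lemma CrossDependent.sum_dens_add_mul_dens_le [Fintype α] (hF : CrossDependent F)
    (hnested : Antitone F) (htl : t * l ≤ Fintype.card α) (hκ : 0 < κ)
    (htκ : 2 * (1 + κ) ≤ κ ^ 3 * t) (hx : 0 ≤ x) (hq : 0 < q) (hqs : q ≤ s + 1)
    (ht : s + x + 1 ≤ t) (ha : (((F (Fin.last s)).dens : ℝ) + 2 * κ) * t ≤ s * x / q) :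
    ∑ i : Fin s, ((F i.castSucc).dens : ℝ) + q * (F (Fin.last s)).dens ≤ s := by
  classical
  obtain ⟨P, hP⟩ := exists_pairwise_disjoint_powersetCard htl
  have hpos : (0 : ℝ) < t := by linarith [(Nat.cast_nonneg s : (0 : ℝ) ≤ s)]
  set a : ℝ := ((F (Fin.last s)).dens : ℝ)
  let X (σ : Equiv.Perm α) (i : Fin (s + 1)) : ℝ := #{k | σ • P k ∈ F i}
  have hmean (i : Fin (s + 1)) : 𝔼 σ, X σ i = t * (F i).dens := by
    simpa using expect_card_filter_perm_smul_mem P (F i)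
  have hvar : 𝔼 σ, (X σ (Fin.last s) - a * t) ^ 2 ≤ 2 * t * a := by
    simpa [mul_comm a] using expect_sq_card_filter_perm_smul_mem_sub_le hP (F (Fin.last s))
  have hpointwise (σ : Equiv.Perm α) :
      ∑ i : Fin s, X σ i.castSucc + q * X σ (Fin.last s) ≤
        s * t - q * (κ * X σ (Fin.last s) -
          (1 + κ) / (κ ^ 2 * t) * (X σ (Fin.last s) - a * t) ^ 2) :=
    hF.sum_card_add_mul_card_le hnested (P := fun k ↦ σ • P k)
      (fun i j hij ↦ (disjoint_smul_finset_iff σ).2 (hP hij)) hκ hx hq hqs ht ha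
  have hexpect := expect_le_expect (s := univ) fun σ _ ↦ hpointwise σ
  simp only [expect_add_distrib, expect_sub_distrib, ← mul_expect, expect_sum_comm, hmean,
    Fintype.expect_const] at hexpect
  have hloss : (1 + κ) / (κ ^ 2 * t) * 𝔼 σ, (X σ (Fin.last s) - a * t) ^ 2 ≤ κ * (t * a) :=
    calc (1 + κ) / (κ ^ 2 * t) * 𝔼 σ, (X σ (Fin.last s) - a * t) ^ 2
        ≤ (1 + κ) / (κ ^ 2 * t) * (2 * t * a) := by gcongr
      _ = 2 * (1 + κ) * a / κ ^ 2 := by field_simp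
      _ ≤ κ ^ 3 * t * a / κ ^ 2 := by gcongr
      _ = κ * (t * a) := by field_simp
  refine le_of_mul_le_mul_left ?_ hpos
  rw [mul_add, mul_sum]
  linarith [mul_le_mul_of_nonneg_left hloss hq.le]

end CrossDependent

section Restrict

variable {V : Type*} [DecidableEq V] {Y : Finset V} {l : ℕ} {𝓐 𝓑 : Finset (Finset V)}

variable (Y l) in
/-- The `l`-element members of `𝓐` that lie in `Y`, viewed as sets of elements of the type `Y`. -/
def restrictTo (𝓐 : Finset (Finset V)) : Finset (Set.powersetCard Y l) :=
  {A | A.1.map (.subtype (· ∈ Y)) ∈ 𝓐}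

lemma mem_restrictTo {A : Set.powersetCard Y l} :
    A ∈ restrictTo Y l 𝓐 ↔ A.1.map (.subtype (· ∈ Y)) ∈ 𝓐 := by
  simp [restrictTo]

lemma restrictTo_mono (h : 𝓐 ⊆ 𝓑) : restrictTo Y l 𝓐 ⊆ restrictTo Y l 𝓑 :=
  fun _ hA ↦ mem_restrictTo.2 (h (mem_restrictTo.1 hA))

lemma card_restrictTo (h𝓐 : ∀ A ∈ 𝓐, A ⊆ Y ∧ #A = l) : #(restrictTo Y l 𝓐) = #𝓐 := by
  refine card_bij (fun A _ ↦ A.1.map (.subtype (· ∈ Y))) (fun A hA ↦ mem_restrictTo.1 hA)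
    (fun A _ B _ hAB ↦ Subtype.ext (map_injective _ hAB)) fun A hA ↦ ?_
  obtain ⟨hAY, hAl⟩ := h𝓐 A hA
  have hmap : (A.subtype (· ∈ Y)).map (.subtype (· ∈ Y)) = A := subtype_map_of_mem hAY
  have hcard : #(A.subtype (· ∈ Y)) = l := by rw [← card_map, hmap, hAl]
  exact ⟨⟨A.subtype (· ∈ Y), hcard⟩, mem_restrictTo.2 (hmap.symm ▸ hA), hmap⟩

lemma dens_restrictTo (h𝓐 : ∀ A ∈ 𝓐, A ⊆ Y ∧ #A = l) :
    ((restrictTo Y l 𝓐).dens : ℝ) = #𝓐 / (#Y).choose l := by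
  rw [dens, card_restrictTo h𝓐, ← Nat.card_eq_fintype_card, Set.powersetCard.card,
    Nat.card_eq_fintype_card, Fintype.card_coe]
  push_cast
  rfl

lemma crossDependent_restrictTo {s : ℕ} {F : ℕ → Finset (Finset V)}
    (hF : ¬ ∃ g : ℕ → Finset V, (∀ i ∈ Icc 1 (s + 1), g i ∈ F i) ∧
      ∀ i ∈ Icc 1 (s + 1), ∀ j ∈ Icc 1 (s + 1), i ≠ j → Disjoint (g i) (g j)) :
    CrossDependent fun i : Fin (s + 1) ↦ restrictTo Y l (F (i + 1)) := by
  intro A hA hdisj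
  have hval {i : ℕ} (hi : i ∈ Icc 1 (s + 1)) : (Fin.ofNat (s + 1) (i - 1) : ℕ) + 1 = i := by
    have := mem_Icc.1 hi
    rw [Fin.val_ofNat, Nat.mod_eq_of_lt (by omega)]
    omega
  refine hF ⟨fun i ↦ (A (Fin.ofNat (s + 1) (i - 1))).1.map (.subtype (· ∈ Y)), fun i hi ↦ ?_,
    fun i hi j hj hij ↦ (disjoint_map _).2 (hdisj fun h ↦ hij ?_)⟩
  · simpa only [hval hi] using mem_restrictTo.1 (hA (Fin.ofNat (s + 1) (i - 1)))
  · rw [← hval hi, ← hval hj, h]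

end Restrict

theorem cross_dependent_size_bound_general {V : Type*} {ε : ℝ} (hε : 0 < ε) :
    ∃ s₀ : ℕ, ∀ s : ℕ, s₀ ≤ s → ∀ (Y : Finset V) (l t : ℕ), t * l ≤ #Y →
    ∀ F : ℕ → Finset (Finset V),
      (∀ i ∈ Icc 1 (s + 1), ∀ A ∈ F i, A ⊆ Y ∧ #A = l) →
      (∀ i ∈ Icc 1 s, F (i + 1) ⊆ F i) →
      (¬ ∃ g : ℕ → Finset V, (∀ i ∈ Icc 1 (s + 1), g i ∈ F i) ∧
        ∀ i ∈ Icc 1 (s + 1), ∀ j ∈ Icc 1 (s + 1), i ≠ j → Disjoint (g i) (g j)) →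
    ∀ α x q : ℝ, (#(F (s + 1)) : ℝ) = α * (#Y).choose l →
      0 ≤ x → 0 < q → q ≤ s + 1 → (α + ε) * t ≤ s * x / q → s + x + 1 ≤ (t : ℝ) →
      ∑ i ∈ Icc 1 s, (#(F i) : ℝ) + q * #(F (s + 1)) ≤ s * (#Y).choose l := by
  classical
  obtain ⟨κ, rfl⟩ : ∃ κ, ε = 2 * κ := ⟨ε / 2, by ring⟩
  have hκ : 0 < κ := by linarith
  refine ⟨⌈2 * (1 + κ) / κ ^ 3⌉₊, fun s hs Y l t htl F hFY hnested hcross α x q hα hx hq hqs ha ht ↦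
    ?_⟩
  have hst : (s : ℝ) ≤ t := by linarith
  have htκ : 2 * (1 + κ) ≤ κ ^ 3 * t := by
    rw [← div_le_iff₀' (by positivity)]
    exact (Nat.ceil_le.1 hs).trans hst
  have hN : (0 : ℝ) < (#Y).choose l := by
    have ht_pos : 0 < t := by exact_mod_cast (show (0 : ℝ) < t by linarith [s.cast_nonneg (α := ℝ)])
    exact_mod_cast Nat.choose_pos ((Nat.le_mul_of_pos_left l ht_pos).trans htl)
  let G (i : Fin (s + 1)) : Finset (Set.powersetCard Y l) := restrictTo Y l (F (i + 1))
  have hG : Antitone G := Fin.antitone_iff_succ_le.2 fun i ↦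
    restrictTo_mono (hnested _ (by simp))
  have hdens (i : Fin (s + 1)) : ((G i).dens : ℝ) = #(F (i + 1)) / (#Y).choose l :=
    dens_restrictTo (hFY _ (by simp [i.is_le]))
  have hlast : ((G (Fin.last s)).dens : ℝ) = α := by
    rw [hdens, Fin.val_last, hα, mul_div_cancel_right₀ _ hN.ne']
  have hsum : ∑ i : Fin s, ((G i.castSucc).dens : ℝ) =
      (∑ i ∈ Icc 1 s, (#(F i) : ℝ)) / (#Y).choose l := by
    simp only [hdens, Fin.val_castSucc, sum_div]
    rw [Fin.sum_univ_eq_sum_range fun i ↦ (#(F (i + 1)) / (#Y).choose l : ℝ), range_eq_Ico,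
      sum_Ico_add' (fun i ↦ (#(F i) / (#Y).choose l : ℝ)), zero_add, Ico_add_one_right_eq_Icc]
  have hmain : ∑ i : Fin s, ((G i.castSucc).dens : ℝ) + q * (G (Fin.last s)).dens ≤ s :=
    (crossDependent_restrictTo hcross).sum_dens_add_mul_dens_le hG (by simpa using htl)
      hκ htκ hx hq hqs ht (hlast.symm ▸ ha)
  rwa [hsum, hdens, Fin.val_last, ← mul_div_assoc, ← add_div, div_le_iff₀ hN] at hmain

theorem cross_dependent_size_bound :
    ∀ ε : ℝ, 0 < ε → ∃ s₀ : ℕ, ∀ s : ℕ, s₀ ≤ s →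
    ∀ (Y : Finset ℕ) (l t : ℕ), 0 < l → 0 < t → t * l ≤ Y.card →
    ∀ F : ℕ → Finset (Finset ℕ),
      (∀ i ∈ Finset.Icc 1 (s + 1), ∀ A ∈ F i, A ⊆ Y ∧ A.card = l) →
      (∀ i ∈ Finset.Icc 1 s, F (i + 1) ⊆ F i) →
      (¬ ∃ g : ℕ → Finset ℕ,
        (∀ i ∈ Finset.Icc 1 (s + 1), g i ∈ F i) ∧
        ∀ i ∈ Finset.Icc 1 (s + 1), ∀ j ∈ Finset.Icc 1 (s + 1), i ≠ j →
          Disjoint (g i) (g j)) →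
    ∀ α x q : ℝ,
      ((F (s + 1)).card : ℝ) = α * (Y.card.choose l : ℝ) →
      1 ≤ x → x ≤ (s : ℝ) + 1 → 1 ≤ q → q ≤ (s : ℝ) + 1 →
      (α + ε) * t ≤ (s : ℝ) * x / q → (s : ℝ) + x + 1 ≤ (t : ℝ) →
      (∑ i ∈ Finset.Icc 1 s, ((F i).card : ℝ)) + q * ((F (s + 1)).card : ℝ) ≤
        (s : ℝ) * (Y.card.choose l : ℝ) := by
  intro ε hε
  obtain ⟨s₀, h⟩ := cross_dependent_size_bound_general (V := ℕ) hε
  exact ⟨s₀, fun s hs Y l t _ _ htl F hFY hnested hcross α x q hα hx _ hq ↦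
    h s hs Y l t htl F hFY hnested hcross α x q hα (by linarith) (by linarith)⟩
end

section
/- Let F be an initial (shifted) family of k-element subsets of [n] with ν(F) ≤ s. Then for every F ∈ F there exists an integer i with 1 ≤ i ≤ k such that |F ∩ [i(s+1) − 1]| ≥ i. -/
open Finset

/-- The shifting partial order: `A ≺ B` iff `A ≠ B`, the two sets have the same
size, and the `i`-th smallest element of `A` is at most the `i`-th smallest
element of `B` for every `i`. -/
def ShiftPrec (A B : Finset ℕ) : Prop :=
  A ≠ B ∧ List.Forall₂ (· ≤ ·) (A.sort (· ≤ ·)) (B.sort (· ≤ ·))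

/-- A family of subsets of `[m] = {1,…,m}` is initial (shifted) if it is closed
downwards with respect to the shifting partial order. -/
def IsInitial (m : ℕ) (F : Finset (Finset ℕ)) : Prop :=
  ∀ A B : Finset ℕ, A ⊆ Finset.Icc 1 m → ShiftPrec A B → B ∈ F → A ∈ F

/-- The matching number of a family of finite sets: the maximum size of a
subfamily consisting of pairwise disjoint sets. -/
noncomputable def matchingNumber (F : Finset (Finset ℕ)) : ℕ :=
  sSup {t : ℕ | ∃ M : Finset (Finset ℕ), M ⊆ F ∧
    (M : Set (Finset ℕ)).Pairwise (fun A B => Disjoint A B) ∧ M.card = t}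

/-!
If the conclusion fails for `A = {a₁ < … < aₖ}`, then `aᵢ ≥ i(s + 1)` for every `i`. Hence the
`i`-th block `[(i - 1)(s + 1) + 1, i(s + 1)]` lies weakly below `aᵢ`, and each of the `s + 1`
residue classes modulo `s + 1` yields a set with one element in each of the first `k` blocks.
Each of these sets equals `A` or precedes it in the shifting order, so they form a matching of size
`s + 1` in the family.
-/

section SortedEnumeration

variable {α : Type*} [LinearOrder α] {k : ℕ}

theorem sort_image_univ_of_strictMono {f : Fin k → α} (hf : StrictMono f) :
    (univ.image f).sort = (List.finRange k).map f := by
  have hcard : #(univ.image f) = k := by rw [card_image_of_injective _ hf.injective, card_fin]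
  have henum : f = (univ.image f).orderEmbOfFin hcard :=
    orderEmbOfFin_unique hcard (fun i ↦ mem_image_of_mem f (mem_univ i)) hf
  rw [← listMap_orderEmbOfFin_finRange _ hcard, ← henum]

theorem card_filter_le_orderEmbOfFin (s : Finset α) (hs : #s = k) (i : Fin k) :
    #{a ∈ s | a ≤ s.orderEmbOfFin hs i} = i + 1 := by
  have hmap := map_orderEmbOfFin_univ s hs
  generalize s.orderEmbOfFin hs = e at hmap ⊢
  rw [← hmap, filter_map, card_map]
  simp [filter_ge_eq_Iic]

end SortedEnumeration

theorem card_le_matchingNumber {F M : Finset (Finset ℕ)} (hMF : M ⊆ F)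
    (hM : (M : Set (Finset ℕ)).PairwiseDisjoint id) : #M ≤ matchingNumber F := by
  refine le_csSup ⟨#F, ?_⟩ ⟨M, hMF, hM, rfl⟩
  rintro _ ⟨N, hNF, -, rfl⟩
  exact card_le_card hNF

theorem card_le_matchingNumber_of_pairwiseDisjoint {ι : Type*} {F : Finset (Finset ℕ)}
    {t : Finset ι} {B : ι → Finset ℕ} (hBF : ∀ j ∈ t, B j ∈ F) (hB : ∀ j ∈ t, (B j).Nonempty)
    (hdisj : (t : Set ι).PairwiseDisjoint B) : #t ≤ matchingNumber F := by
  have hinj : Set.InjOn B t := fun j hj l hl hjl ↦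
    hdisj.elim hj hl fun h ↦ (hB j hj).ne_empty (disjoint_self.1 (hjl ▸ h))
  rw [← card_image_of_injOn hinj]
  refine card_le_matchingNumber (image_subset_iff.2 hBF) ?_
  rw [coe_image]
  exact hinj.pairwiseDisjoint_image.2 hdisj

/-- The arithmetic progression `{a, a + d, …, a + (k - 1)d}`; those with `1 ≤ a ≤ d` form the
matching. It is an image of `Fin k` so that, for `0 < d`, the defining map is its increasing
enumeration. -/
def arithProg (a d k : ℕ) : Finset ℕ :=
  univ.image fun i : Fin k ↦ a + i * d

theorem disjoint_arithProg {a b d k l : ℕ} (h : ¬a ≡ b [MOD d]) :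
    Disjoint (arithProg a d k) (arithProg b d l) := by
  simp only [arithProg, disjoint_left, mem_image, mem_univ, true_and]
  rintro _ ⟨i, rfl⟩ ⟨j, hij⟩
  apply h
  simpa [Nat.ModEq] using congrArg (· % d) hij.symm

theorem pairwiseDisjoint_arithProg (d k : ℕ) :
    (range d : Set ℕ).PairwiseDisjoint fun j ↦ arithProg (j + 1) d k := by
  intro j hj l hl hjl
  refine disjoint_arithProg fun h ↦ hjl ?_
  exact (h.add_right_cancel' 1).eq_of_lt_of_lt (mem_range.1 hj) (mem_range.1 hl)

namespace IsInitial

variable {n k d : ℕ} {F : Finset (Finset ℕ)} {A : Finset ℕ}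

theorem image_mem (hF : IsInitial n F) (hA : A ∈ F) (hAn : A ⊆ Icc 1 n) (hAk : #A = k)
    {f : Fin k → ℕ} (hf : StrictMono f) (hpos : ∀ i, 1 ≤ f i)
    (hle : ∀ i, f i ≤ A.orderEmbOfFin hAk i) : univ.image f ∈ F := by
  by_cases hne : univ.image f = A
  · rwa [hne]
  refine hF _ A ?_ ⟨hne, ?_⟩ hA
  · refine image_subset_iff.2 fun i _ ↦ mem_Icc.2 ⟨hpos i, (hle i).trans ?_⟩
    exact (mem_Icc.1 (hAn (A.orderEmbOfFin_mem hAk i))).2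
  · rw [sort_image_univ_of_strictMono hf, ← listMap_orderEmbOfFin_finRange A hAk,
      List.forall₂_map_left_iff, List.forall₂_map_right_iff, List.forall₂_same]
    exact fun i _ ↦ hle i

theorem arithProg_mem (hF : IsInitial n F) (hA : A ∈ F) (hAn : A ⊆ Icc 1 n) (hAk : #A = k)
    (hlow : ∀ i : Fin k, (i + 1) * d ≤ A.orderEmbOfFin hAk i) {j : ℕ} (hj : j < d) :
    arithProg (j + 1) d k ∈ F := by
  refine hF.image_mem hA hAn hAk (fun i i' hi ↦ ?_) (fun i ↦ by omega) fun i ↦ ?_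
  · have hd : 0 < d := by omega
    gcongr
    exact hi
  · calc j + 1 + i * d ≤ d + i * d := by gcongr; omega
      _ = (i + 1) * d := by ring
      _ ≤ A.orderEmbOfFin hAk i := hlow i

theorem le_matchingNumber (hF : IsInitial n F) (hA : A ∈ F) (hAn : A ⊆ Icc 1 n) (hAk : #A = k)
    (hk : 1 ≤ k) (hlow : ∀ i : Fin k, (i + 1) * d ≤ A.orderEmbOfFin hAk i) :
    d ≤ matchingNumber F := by
  rw [← card_range d]
  refine card_le_matchingNumber_of_pairwiseDisjoint
    (fun j hj ↦ hF.arithProg_mem hA hAn hAk hlow (mem_range.1 hj)) (fun j _ ↦ ?_)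
    (pairwiseDisjoint_arithProg d k)
  exact ⟨_, mem_image_of_mem _ (mem_univ ⟨0, hk⟩)⟩

end IsInitial

theorem shifted_intersection_lower_bound_general {n s : ℕ} {F : Finset (Finset ℕ)}
    (hinit : IsInitial n F) (hnu : matchingNumber F ≤ s) {A : Finset ℕ} (hA : A ∈ F)
    (hAn : A ⊆ Icc 1 n) (hne : A.Nonempty) :
    ∃ i : ℕ, 1 ≤ i ∧ i ≤ #A ∧ i ≤ #(A ∩ Icc 1 (i * (s + 1) - 1)) := by
  obtain ⟨i, hi⟩ : ∃ i : Fin #A, A.orderEmbOfFin rfl i < (i + 1) * (s + 1) := by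
    by_contra! hlow
    have hs := hinit.le_matchingNumber hA hAn rfl hne.card_pos hlow
    omega
  refine ⟨i + 1, by omega, i.isLt, ?_⟩
  have hsub : {a ∈ A | a ≤ A.orderEmbOfFin rfl i} ⊆ A ∩ Icc 1 ((i + 1) * (s + 1) - 1) := by
    intro a ha
    obtain ⟨haA, hai⟩ := mem_filter.1 ha
    exact mem_inter.2 ⟨haA, mem_Icc.2 ⟨(mem_Icc.1 (hAn haA)).1, by omega⟩⟩
  calc i + 1 = #{a ∈ A | a ≤ A.orderEmbOfFin rfl i} := (card_filter_le_orderEmbOfFin A rfl i).symm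
    _ ≤ #(A ∩ Icc 1 ((i + 1) * (s + 1) - 1)) := card_le_card hsub

theorem shifted_intersection_lower_bound (n k s : ℕ) (hk : 1 ≤ k)
    (F : Finset (Finset ℕ)) (hF : F ⊆ (Finset.Icc 1 n).powersetCard k)
    (hinit : IsInitial n F) (hnu : matchingNumber F ≤ s) :
    ∀ A ∈ F, ∃ i : ℕ, 1 ≤ i ∧ i ≤ k ∧
      i ≤ (A ∩ Finset.Icc 1 (i * (s + 1) - 1)).card := by
  intro A hA
  obtain ⟨hAn, rfl⟩ := mem_powersetCard.1 (hF hA)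
  exact shifted_intersection_lower_bound_general hinit hnu hA hAn (card_pos.1 hk)
end
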